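/- arXiv:2510.16976 — 6 statements merged into one kernel-verified Lean document; each statement's English description precedes it below -/
import Mathlib

section
/- Let k ≥ 1 and for each i = 1, …, k let dᵢ ≥ 1 be an integer, Aᵢ : (ℝⁿ)^{dᵢ} → ℝ a continuous dᵢ-multilinear map, and Φᵢ : ℝⁿ → ℝ the homogeneous polynomial function Φᵢ(z) = Aᵢ(z, …, z). Let ε₁, …, ε_k : ℝⁿ → ℝ be C^∞ and set h := Σᵢ₌₁ᵏ εᵢ·Φᵢ. Then for every ℓ ∈ ℕ and every z ∈ ℝⁿ with Φᵢ(z) = 0 for all i, the degree-ℓ Taylor polynomial of h at 0 vanishes at z, i.e. T^ℓ₀h(z) = 0. -/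
/-!
If every `Φᵢ` vanishes at `z`, then by homogeneity it vanishes on the whole line `ℝ z`, and hence so
does `h`. The number `Dᵐh(0)[z,…,z]` is the `m`-th derivative at `0` of `t ↦ h (t • z)`, which is
the zero function, so each term of the Taylor polynomial is zero
(`iteratedFDeriv_diag_eq_zero_of_line`).
-/

/-- The degree-`ℓ` Taylor polynomial of `f` at `0`, as a function of `z`:
`T^ℓ₀f(z) = ∑_{i=0}^{ℓ} (1/i!)·Dⁱf(0)[z,…,z]`. -/
noncomputable def taylorPolyAt0 {n : ℕ} (ℓ : ℕ) (f : (Fin n → ℝ) → ℝ)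
    (z : Fin n → ℝ) : ℝ :=
  ∑ i ∈ Finset.range (ℓ + 1),
    (1 / (i.factorial : ℝ)) * iteratedFDeriv ℝ i f 0 (fun _ => z)

/-- The diagonal value `Dᵐf(0)[z,…,z]` depends only on the restriction of `f` to the line `ℝ z`, so
it vanishes as soon as this restriction does. -/
theorem iteratedFDeriv_diag_eq_zero_of_line {E : Type*} [NormedAddCommGroup E] [NormedSpace ℝ E]
    {f : E → ℝ} (hf : ContDiff ℝ (⊤ : ℕ∞) f) (z : E) (hz : ∀ t : ℝ, f (t • z) = 0) (m : ℕ) :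
    iteratedFDeriv ℝ m f 0 (fun _ => z) = 0 := by
  have hline : f ∘ ContinuousLinearMap.toSpanSingleton ℝ z = 0 := by
    funext t
    simpa using hz t
  have hchain := (ContinuousLinearMap.toSpanSingleton ℝ z).iteratedFDeriv_comp_right hf 0
    (i := m) (by exact_mod_cast le_top)
  rw [hline] at hchain
  simpa using (congrArg (fun B => B (fun _ => (1 : ℝ))) hchain).symm

/-- Lemma 6.1, part (1), of the paper: if `h = ∑ᵢ εᵢ·Φᵢ`, where each `Φᵢ` is a homogeneous
polynomial of degree `dᵢ ≥ 1` coming from a continuous multilinear map `Aᵢ` and each `εᵢ` is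
smooth, then every Taylor polynomial of `h` at `0` vanishes on the common zero set of the
`Φᵢ`. -/
theorem taylor_vanishes_on_common_zeros (n k : ℕ) (hk : 1 ≤ k)
    (d : Fin k → ℕ) (hd : ∀ i, 1 ≤ d i)
    (A : ∀ i : Fin k, ContinuousMultilinearMap ℝ (fun _ : Fin (d i) => (Fin n → ℝ)) ℝ)
    (ε : Fin k → (Fin n → ℝ) → ℝ) (hε : ∀ i, ContDiff ℝ (⊤ : ℕ∞) (ε i))
    (h : (Fin n → ℝ) → ℝ) (hh : ∀ w, h w = ∑ i, ε i w * A i (fun _ => w))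
    (ℓ : ℕ) (z : Fin n → ℝ) (hz : ∀ i, A i (fun _ => z) = 0) :
    taylorPolyAt0 ℓ h z = 0 := by
  have h_smooth : ContDiff ℝ (⊤ : ℕ∞) h := by
    rw [funext hh]
    exact ContDiff.sum fun i _ =>
      (hε i).mul ((A i).contDiff.comp (contDiff_pi.2 fun _ => contDiff_id))
  have h_line : ∀ t : ℝ, h (t • z) = 0 := by
    intro t
    rw [hh]
    refine Finset.sum_eq_zero fun i _ => ?_
    have h_hom := (A i).map_smul_univ (fun _ => t) (fun _ => z)
    simp only [h_hom, hz i, smul_zero, mul_zero]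
  unfold taylorPolyAt0
  refine Finset.sum_eq_zero fun m _ => ?_
  rw [iteratedFDeriv_diag_eq_zero_of_line h_smooth z h_line m, mul_zero]
end

section
/- Let V ⊆ ℝ² be a convex open neighborhood of (0,0) and let k : V → ℝ be continuous on V and C^∞ on V ∖ {(0,0)}, with the partial derivative ∂k/∂y strictly positive at every point of V ∖ {(0,0)}. Define F : V → ℝ² by F(x,y) = (x, k(x,y)). Then F is injective, F(V) is open in ℝ², F is a homeomorphism from V onto F(V), and F restricts to a C^∞ diffeomorphism from V ∖ {(0,0)} onto the open set F(V) ∖ {F(0,0)}. -/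
/-!
Fix `x`. On the vertical slice of `V` over `x`, which is an interval by convexity, `k (x, ·)` is
continuous and has positive derivative except possibly at one point, so it is strictly increasing
(`slice_lt`). As `F` preserves the first coordinate, it is therefore injective.

For a map of this triangular shape, openness needs only the intermediate value theorem rather
than invariance of domain (`image_mem_nhds`): if `k (a, c) < k (a, b) < k (a, d)`
with `c < b < d`, then by continuity
`k (x, c) < t < k (x, d)` for all `(x, t)` near `(a, k (a, b))`, so `t` is attained by `k (x, ·)`
between `c` and `d`. Thus `F` restricts to an open partial homeomorphism with source `V`.
Away from the origin its derivative is `v ↦ (v.1, D v)`, where `D` is the derivative of `k`. It is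
injective because `D (0, 1)`, the partial derivative of `k` in `y`, is positive. Hence it is
invertible, and the smoothness of the inverse follows from the inverse function theorem.
-/

/-- The derivative hypothesis only concerns the open interval, so the exceptional point `o` may
be an endpoint; the general case follows by splitting the interval there. -/
lemma slice_lt_of_ne {V : Set (ℝ × ℝ)} {k : ℝ × ℝ → ℝ} {o : ℝ × ℝ} (hkcont : ContinuousOn k V)
    (hkpos : ∀ p ∈ V \ {o}, 0 < deriv (fun y => k (p.1, y)) p.2) {x c d : ℝ} (hcd : c < d)
    (hV : ∀ y ∈ Set.Icc c d, (x, y) ∈ V) (ho : ∀ y ∈ Set.Ioo c d, (x, y) ≠ o) :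
    k (x, c) < k (x, d) := by
  have hmono : StrictMonoOn (fun y => k (x, y)) (Set.Icc c d) := by
    apply strictMonoOn_of_deriv_pos (convex_Icc c d)
    · exact hkcont.comp (by fun_prop) hV
    · intro y hy
      rw [interior_Icc] at hy
      exact hkpos (x, y) ⟨hV y (Set.Ioo_subset_Icc_self hy), ho y hy⟩
  exact hmono (Set.left_mem_Icc.2 hcd.le) (Set.right_mem_Icc.2 hcd.le) hcd

lemma slice_lt {V : Set (ℝ × ℝ)} {k : ℝ × ℝ → ℝ} {o : ℝ × ℝ} (hVconv : Convex ℝ V)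
    (hkcont : ContinuousOn k V)
    (hkpos : ∀ p ∈ V \ {o}, 0 < deriv (fun y => k (p.1, y)) p.2) {x c d : ℝ} (hcd : c < d)
    (hc : (x, c) ∈ V) (hd : (x, d) ∈ V) :
    k (x, c) < k (x, d) := by
  have hV : ∀ y ∈ Set.Icc c d, (x, y) ∈ V := by
    intro y hy
    apply hVconv.segment_subset hc hd
    rw [← Prod.image_mk_segment_right, segment_eq_Icc hcd.le]
    exact ⟨y, hy, rfl⟩
  by_cases h : ∃ y ∈ Set.Ioo c d, (x, y) = o
  · obtain ⟨m, hm, rfl⟩ := h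
    have h1 : k (x, c) < k (x, m) := slice_lt_of_ne hkcont hkpos hm.1
      (fun y hy => hV y ⟨hy.1, hy.2.trans hm.2.le⟩) (fun y hy h => by
        simp only [Prod.mk.injEq] at h; exact hy.2.ne h.2)
    have h2 : k (x, m) < k (x, d) := slice_lt_of_ne hkcont hkpos hm.2
      (fun y hy => hV y ⟨hm.1.le.trans hy.1, hy.2⟩) (fun y hy h => by
        simp only [Prod.mk.injEq] at h; exact hy.1.ne' h.2)
    exact h1.trans h2
  · push Not at h
    exact slice_lt_of_ne hkcont hkpos hcd hV h

/-- The triangular map `q ↦ (q.1, k q)` sends neighborhoods to neighborhoods, by the intermediate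
value theorem on the vertical slices. -/
lemma image_mem_nhds {V U : Set (ℝ × ℝ)} {k : ℝ × ℝ → ℝ} (hVopen : IsOpen V)
    (hkcont : ContinuousOn k V)
    (hmono : ∀ x c d, c < d → (x, c) ∈ V → (x, d) ∈ V → k (x, c) < k (x, d))
    (hUV : U ⊆ V) {p : ℝ × ℝ} (hU : U ∈ nhds p) :
    (fun q : ℝ × ℝ => (q.1, k q)) '' U ∈ nhds (p.1, k p) := by
  obtain ⟨a, b⟩ := p
  obtain ⟨ε, hε, hball⟩ := Metric.nhds_basis_closedBall.mem_iff.1 hU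
  -- For the sup metric on `ℝ × ℝ`, a ball is a box, hence contains whole vertical segments.
  have hbox : ∀ x ∈ Metric.closedBall a ε, ∀ y ∈ Set.Icc (b - ε) (b + ε), (x, y) ∈ U := by
    intro x hx y hy
    apply hball
    rw [← closedBall_prod_same]
    exact ⟨hx, by rwa [Real.closedBall_eq_Icc]⟩
  have ha : a ∈ Metric.closedBall a ε := Metric.mem_closedBall_self hε.le
  have hVa : ∀ y ∈ Set.Icc (b - ε) (b + ε), (a, y) ∈ V := fun y hy => hUV (hbox a ha y hy)
  have hcV : (a, b - ε) ∈ V := hVa _ ⟨le_rfl, by linarith⟩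
  have hbV : (a, b) ∈ V := hVa _ ⟨by linarith, by linarith⟩
  have hdV : (a, b + ε) ∈ V := hVa _ ⟨by linarith, le_rfl⟩
  have h1 : k (a, b - ε) < k (a, b) := hmono _ _ _ (by linarith) hcV hbV
  have h2 : k (a, b) < k (a, b + ε) := hmono _ _ _ (by linarith) hbV hdV
  have hcont : ∀ y, (a, y) ∈ V → Filter.Tendsto (fun q : ℝ × ℝ => k (q.1, y))
      (nhds (a, k (a, b))) (nhds (k (a, y))) := by
    intro y hy
    have hk : ContinuousAt k (a, y) := hkcont.continuousAt (hVopen.mem_nhds hy)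
    have hline : ContinuousAt (fun q : ℝ × ℝ => (q.1, y)) (a, k (a, b)) := by fun_prop
    exact Filter.Tendsto.comp (g := k) hk hline
  have hsnd : Filter.Tendsto (fun q : ℝ × ℝ => q.2) (nhds (a, k (a, b))) (nhds (k (a, b))) :=
    continuous_snd.tendsto (a, k (a, b))
  have hfst : ∀ᶠ q : ℝ × ℝ in nhds (a, k (a, b)), q.1 ∈ Metric.closedBall a ε :=
    (continuous_fst.tendsto (a, k (a, b))).eventually (Metric.closedBall_mem_nhds a hε)
  filter_upwards [(hcont _ hcV).eventually_lt hsnd h1, hsnd.eventually_lt (hcont _ hdV) h2, hfst]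
    with q hq1 hq2 hq3
  have hslice : ContinuousOn (fun y => k (q.1, y)) (Set.Icc (b - ε) (b + ε)) :=
    hkcont.comp (by fun_prop) fun y hy => hUV (hbox _ hq3 y hy)
  obtain ⟨y, hy, hky⟩ := intermediate_value_Icc (by linarith) hslice ⟨hq1.le, hq2.le⟩
  exact ⟨(q.1, y), hbox _ hq3 y hy, Prod.ext rfl hky⟩

/-- A triangular derivative `v ↦ (v.1, D v)` with `D (0, 1) ≠ 0` is an isomorphism. -/
lemma exists_equiv_of_triangular (D : ℝ × ℝ →L[ℝ] ℝ) (hD : D (0, 1) ≠ 0) :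
    ∃ e : (ℝ × ℝ) ≃L[ℝ] ℝ × ℝ,
      (e : ℝ × ℝ →L[ℝ] ℝ × ℝ) = (ContinuousLinearMap.fst ℝ ℝ ℝ).prod D := by
  have hinj : Function.Injective ((ContinuousLinearMap.fst ℝ ℝ ℝ).prod D) := by
    rw [injective_iff_map_eq_zero]
    rintro ⟨u, v⟩ h
    simp only [ContinuousLinearMap.prod_apply, ContinuousLinearMap.coe_fst', Prod.mk_eq_zero] at h
    obtain ⟨rfl, h⟩ := h
    have hv : ((0 : ℝ), v) = v • ((0 : ℝ), (1 : ℝ)) := by simp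
    rw [hv, map_smul, smul_eq_mul, mul_eq_zero] at h
    simp [h.resolve_right hD]
  exact ⟨(LinearEquiv.ofInjectiveEndo
    ((ContinuousLinearMap.fst ℝ ℝ ℝ).prod D).toLinearMap hinj).toContinuousLinearEquiv,
    by ext <;> rfl⟩


/-- Intermediate claim in the proof of Proposition 4.2 of the paper: if `k` is continuous
on a convex open neighborhood `V` of the origin in `ℝ²`, smooth on `V ∖ {(0,0)}` with
`∂k/∂y > 0` there, then `F(x,y) = (x, k(x,y))` is injective on `V`, `F(V)` is open, `F` is a
homeomorphism from `V` onto `F(V)`, and `F` restricts to a smooth diffeomorphism from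
`V ∖ {(0,0)}` onto `F(V) ∖ {F(0,0)}`. -/
theorem triangular_map_open_embedding (V : Set (ℝ × ℝ)) (hVopen : IsOpen V)
    (hVconv : Convex ℝ V) (hV0 : ((0 : ℝ), (0 : ℝ)) ∈ V)
    (k : ℝ × ℝ → ℝ) (hkcont : ContinuousOn k V)
    (hksmooth : ContDiffOn ℝ (⊤ : ℕ∞) k (V \ {((0 : ℝ), (0 : ℝ))}))
    (hkpos : ∀ p ∈ V \ {((0 : ℝ), (0 : ℝ))}, 0 < deriv (fun y => k (p.1, y)) p.2)
    (F : ℝ × ℝ → ℝ × ℝ) (hF : ∀ p, F p = (p.1, k p)) :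
    Set.InjOn F V ∧ IsOpen (F '' V) ∧ ContinuousOn F V ∧
    ∃ G : ℝ × ℝ → ℝ × ℝ,
      ContinuousOn G (F '' V) ∧
      (∀ p ∈ V, G (F p) = p) ∧ (∀ q ∈ F '' V, F (G q) = q) ∧
      F '' (V \ {((0 : ℝ), (0 : ℝ))}) = F '' V \ {F ((0 : ℝ), (0 : ℝ))} ∧
      ContDiffOn ℝ (⊤ : ℕ∞) F (V \ {((0 : ℝ), (0 : ℝ))}) ∧
      ContDiffOn ℝ (⊤ : ℕ∞) G (F '' V \ {F ((0 : ℝ), (0 : ℝ))}) := by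
  obtain rfl : F = fun p => (p.1, k p) := funext hF
  have hmono : ∀ x c d, c < d → (x, c) ∈ V → (x, d) ∈ V → k (x, c) < k (x, d) :=
    fun x c d hcd hc hd => slice_lt hVconv hkcont hkpos hcd hc hd
  have hinj : Set.InjOn (fun p : ℝ × ℝ => (p.1, k p)) V := by
    rintro ⟨x, y⟩ hy ⟨x', y'⟩ hy' h
    simp only [Prod.mk.injEq] at h
    obtain ⟨rfl, h⟩ := h
    rcases lt_trichotomy y y' with hlt | rfl | hlt
    · exact absurd h (hmono _ _ _ hlt hy hy').ne
    · rfl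
    · exact absurd h (hmono _ _ _ hlt hy' hy).ne'
  have hFcont : ContinuousOn (fun p : ℝ × ℝ => (p.1, k p)) V := continuousOn_fst.prodMk hkcont
  have hopen : IsOpenMap (V.domRestrict fun p : ℝ × ℝ => (p.1, k p)) := by
    rw [isOpenMap_iff_nhds_le]
    intro p s hs
    have hs' : Subtype.val '' (V.domRestrict (fun p : ℝ × ℝ => (p.1, k p)) ⁻¹' s) ∈ nhds p.1 :=
      hVopen.isOpenMap_subtype_val.image_mem_nhds hs
    refine Filter.mem_of_superset
      (image_mem_nhds hVopen hkcont hmono (Subtype.coe_image_subset _ _) hs') ?_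
    rintro _ ⟨_, ⟨r, hr, rfl⟩, rfl⟩
    exact hr
  let e : OpenPartialHomeomorph (ℝ × ℝ) (ℝ × ℝ) :=
    OpenPartialHomeomorph.ofContinuousOpenRestrict
      (hinj.bijOn_image.toPartialEquiv (fun p : ℝ × ℝ => (p.1, k p)) V _) hFcont hopen hVopen
  have hleft : ∀ p ∈ V, e.symm (p.1, k p) = p := fun p hp => e.left_inv hp
  have himage : (fun p : ℝ × ℝ => (p.1, k p)) '' (V \ {((0 : ℝ), (0 : ℝ))}) =
      (fun p : ℝ × ℝ => (p.1, k p)) '' V \ {((0 : ℝ), k (0, 0))} := by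
    rw [hinj.image_sdiff_subset (Set.singleton_subset_iff.2 hV0), Set.image_singleton]
  have hWopen : IsOpen (V \ {((0 : ℝ), (0 : ℝ))}) := hVopen.sdiff isClosed_singleton
  refine ⟨hinj, e.open_target, hFcont, e.symm, e.continuousOn_symm, hleft,
    fun q hq => e.right_inv hq, himage, contDiffOn_fst.prodMk hksmooth, ?_⟩
  intro q hq
  rw [← himage] at hq
  obtain ⟨p, hp, rfl⟩ := hq
  have hk : ContDiffAt ℝ (⊤ : ℕ∞) k p := hksmooth.contDiffAt (hWopen.mem_nhds hp)
  have hkd : HasFDerivAt k (fderiv ℝ k p) p := (hk.differentiableAt (by simp)).hasFDerivAt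
  -- The partial derivative in `y` is the total derivative applied to `(0, 1)`.
  have hpartial : HasDerivAt (fun y => k (p.1, y)) (fderiv ℝ k p (0, 1)) p.2 :=
    HasFDerivAt.comp_hasDerivAt (l := k) p.2 hkd
      ((hasDerivAt_const p.2 p.1).prodMk (hasDerivAt_id p.2))
  have hD : fderiv ℝ k p (0, 1) ≠ 0 := hpartial.deriv ▸ (hkpos p hp).ne'
  obtain ⟨L, hL⟩ := exists_equiv_of_triangular _ hD
  have hp' : e.symm (p.1, k p) = p := hleft p hp.1
  refine (e.contDiffAt_symm (f₀' := L) (Set.mem_image_of_mem _ hp.1) ?_ ?_).contDiffWithinAt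
  · rw [hp', hL]
    exact hasFDerivAt_fst.prodMk hkd
  · rw [hp']
    exact contDiffAt_fst.prodMk hk
end

section
/- Let N ≥ 2 be an integer, set m := ⌈N/2⌉, and let C > 0. Let h : ℝ³ → ℝ be a C^∞ function, with coordinates (x, y, ρ), such that: (i) ∂h/∂x(0,0,0) = 0; (ii) ∂ᵏh/∂ρᵏ(0,0,0) = 0 for every integer 0 ≤ k < m; and (iii) ∂h/∂y(0,0,0) > 0 if N is odd, while ∂h/∂y(0,0,0) > (Cᵐ/m!)·|∂ᵐh/∂ρᵐ(0,0,0)| if N is even. Define ȟ : ℝ² → ℝ by ȟ(x,y) := h(x, y, C·(x²+y²)^{1/N}). Then ȟ is C^∞ on ℝ² ∖ {(0,0)} and there exists a convex open neighborhood V of (0,0) such that the partial derivative ∂ȟ/∂y is strictly positive at every point of V ∖ {(0,0)}. -/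
/-!
With `r = C (x² + y²)^(1/N)` and `t = √(x² + y²)`, the chain rule gives
`∂ȟ/∂y = h_y(x, y, r) + h_ρ(x, y, r) · ∂r/∂y` with `|∂r/∂y| ≤ (2/N) r / t`.

Write `h_ρ(x, y, r) = h_ρ(0, 0, r) + (h_ρ(x, y, r) - h_ρ(0, 0, r))`. The difference is `O(t)`, since
`h_ρ` is locally Lipschitz, so it contributes only `O(r)`. By Taylor's formula
(`tendsto_div_pow_of_iteratedDeriv_eq_zero`), `|h_ρ(0, 0, r)| / r ^ (m - 1)` tends to
`|∂ᵐh/∂ρᵐ(0)| / (m - 1)!`, so this term contributes asymptotically at most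
`(2/N) (|∂ᵐh/∂ρᵐ(0)| / (m - 1)!) · r ^ m / t`.
Since `(r / C) ^ N = t ^ 2`, the ratio `r ^ m / t` equals `C ^ m` when `N = 2m`, which gives the bound
`C ^ m |∂ᵐh/∂ρᵐ(0)| / m!`, and tends to `0` when `N = 2m - 1` (`exists_radius_pow_le`).
In both cases `h_y(0) > 0` dominates.
-/

open Filter Topology

namespace EphemeralPoint

/-- A smooth function vanishing to order `n` at `0` is asymptotic to its degree `n` Taylor term. -/
lemma tendsto_div_pow_of_iteratedDeriv_eq_zero {u : ℝ → ℝ} (hu : ContDiff ℝ (⊤ : ℕ∞) u) (n : ℕ)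
    (h0 : ∀ k, k < n → iteratedDeriv k u 0 = 0) :
    Tendsto (fun r => u r / r ^ n) (𝓝[≠] 0) (𝓝 (iteratedDeriv n u 0 / n.factorial)) := by
  have h1 := Real.taylor_tendsto (f := u) (x₀ := 0) (n := n) convex_univ (Set.mem_univ _)
    (hu.of_le (by exact_mod_cast le_top)).contDiffOn
  rw [nhdsWithin_univ] at h1
  have h2 := (h1.mono_left (nhdsWithin_le_nhds (s := {0}ᶜ))).add_const
    (iteratedDeriv n u 0 / n.factorial)
  rw [zero_add] at h2
  refine h2.congr' ?_
  filter_upwards [self_mem_nhdsWithin] with r hr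
  have hr : r ≠ 0 := hr
  have hs : taylorWithinEval u n Set.univ 0 r = iteratedDeriv n u 0 / n.factorial * r ^ n := by
    rw [taylor_within_apply, Finset.sum_range_succ, Finset.sum_eq_zero]
    · simp only [iteratedDerivWithin_univ, smul_eq_mul, sub_zero]; ring
    · intro k hk
      rw [iteratedDerivWithin_univ, h0 k (Finset.mem_range.1 hk), smul_zero]
  rw [hs, sub_zero]
  field_simp
  ring

lemma sq_add_sq_pos {p : ℝ × ℝ} (hp : p ≠ 0) : 0 < p.1 ^ 2 + p.2 ^ 2 := by
  have : ¬ (p.1 = 0 ∧ p.2 = 0) := fun ⟨h1, h2⟩ => hp (Prod.ext h1 h2)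
  by_contra! hle
  exact this ⟨by nlinarith [sq_nonneg p.1, sq_nonneg p.2],
    by nlinarith [sq_nonneg p.1, sq_nonneg p.2]⟩

/-- The radial function `w = (x² + y²)^(1/N)`. -/
noncomputable def radius (N : ℕ) (p : ℝ × ℝ) : ℝ := (p.1 ^ 2 + p.2 ^ 2) ^ ((1 : ℝ) / N)

lemma radius_pos (N : ℕ) {p : ℝ × ℝ} (hp : p ≠ 0) : 0 < radius N p :=
  Real.rpow_pos_of_pos (sq_add_sq_pos hp) _

lemma radius_pow {N : ℕ} (hN : N ≠ 0) (p : ℝ × ℝ) : radius N p ^ N = p.1 ^ 2 + p.2 ^ 2 := by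
  rw [radius, one_div, Real.rpow_inv_natCast_pow (by positivity) hN]

lemma continuous_radius (N : ℕ) : Continuous (radius N) := by
  unfold radius
  exact Continuous.rpow_const (by fun_prop) (fun _ => Or.inr (by positivity))

lemma radius_zero {N : ℕ} (hN : N ≠ 0) : radius N 0 = 0 := by
  simp [radius, Real.zero_rpow (inv_ne_zero (Nat.cast_ne_zero.2 hN) : (N : ℝ)⁻¹ ≠ 0)]

lemma hasDerivAt_radius {N : ℕ} {p : ℝ × ℝ} (hp : p ≠ 0) :
    HasDerivAt (fun y => radius N (p.1, y))
      (2 / N * radius N p * p.2 / (p.1 ^ 2 + p.2 ^ 2)) p.2 := by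
  have hs := sq_add_sq_pos hp
  have h1 : HasDerivAt (fun y : ℝ => p.1 ^ 2 + y ^ 2) (2 * p.2) p.2 := by
    simpa using (hasDerivAt_pow 2 p.2).const_add (p.1 ^ 2)
  have h2 := h1.rpow_const (p := (1 : ℝ) / N) (Or.inl hs.ne')
  refine h2.congr_deriv ?_
  rw [radius, Real.rpow_sub_one hs.ne']
  ring

lemma abs_deriv_radius_le (N : ℕ) {p : ℝ × ℝ} (hp : p ≠ 0) :
    |2 / N * radius N p * p.2 / (p.1 ^ 2 + p.2 ^ 2)|
      ≤ 2 / N * radius N p / √(p.1 ^ 2 + p.2 ^ 2) := by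
  have hs := sq_add_sq_pos hp
  have hr := radius_pos N hp
  have ht : 0 < √(p.1 ^ 2 + p.2 ^ 2) := Real.sqrt_pos.2 hs
  have hy : |p.2| ≤ √(p.1 ^ 2 + p.2 ^ 2) := Real.abs_le_sqrt (by nlinarith [sq_nonneg p.1])
  rw [abs_div, abs_mul, abs_of_pos hs, abs_of_nonneg (by positivity : 0 ≤ 2 / N * radius N p),
    div_le_div_iff₀ hs ht]
  have : |p.2| * √(p.1 ^ 2 + p.2 ^ 2) ≤ p.1 ^ 2 + p.2 ^ 2 := by
    nlinarith [Real.mul_self_sqrt hs.le]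
  have h3 : 0 ≤ 2 / N * radius N p := by positivity
  nlinarith [mul_le_mul_of_nonneg_left this h3]

/-- The ratio `w ^ m / √(x² + y²)` is identically `1` for even `N` and tends to `0` for odd `N`;
so near `0` it is bounded by some `L` small enough for `a * L < B`. -/
lemma exists_radius_pow_le {N m : ℕ} (hN : 2 ≤ N) (hm : m = (N + 1) / 2) {a B : ℝ} (ha : 0 ≤ a)
    (hodd : Odd N → 0 < B) (heven : Even N → a < B) :
    ∃ L, 0 ≤ L ∧ a * L < B ∧
      ∀ᶠ p : ℝ × ℝ in 𝓝[≠] 0, radius N p ^ m ≤ L * √(p.1 ^ 2 + p.2 ^ 2) := by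
  have hN0 : N ≠ 0 := by omega
  rcases Nat.even_or_odd N with hE | hO
  · refine ⟨1, zero_le_one, by simpa using heven hE, ?_⟩
    filter_upwards [self_mem_nhdsWithin] with p hp
    have h2 : m * 2 = N := by obtain ⟨k, rfl⟩ := hE; omega
    rw [one_mul]
    apply Real.le_sqrt_of_sq_le
    rw [← pow_mul, h2, radius_pow hN0]
  · have hB := hodd hO
    have h2 : m * 2 = N + 1 := by obtain ⟨k, rfl⟩ := hO; omega
    have hL : 0 < B / (a + 1) := by positivity
    refine ⟨B / (a + 1), hL.le, ?_, ?_⟩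
    · rw [mul_div_assoc', div_lt_iff₀ (by positivity)]
      nlinarith
    · have ht : Tendsto (radius N) (𝓝[≠] 0) (𝓝 0) := by
        have := (continuous_radius N).tendsto 0
        rw [radius_zero hN0] at this
        exact this.mono_left nhdsWithin_le_nhds
      filter_upwards [ht.eventually_lt_const (show 0 < (B / (a + 1)) ^ 2 by positivity)] with p hw
      have hs : 0 ≤ p.1 ^ 2 + p.2 ^ 2 := by positivity
      apply le_of_sq_le_sq _ (by positivity)
      rw [← pow_mul, h2, pow_succ, radius_pow hN0, mul_pow, Real.sq_sqrt hs, mul_comm]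
      exact mul_le_mul_of_nonneg_right hw.le hs

end EphemeralPoint

open EphemeralPoint in

/-- The analytic core of the proof of Proposition 4.2 of the paper. Here `m = ⌈N/2⌉`
(which for natural `N` equals `(N+1)/2` with natural division), the pure partial
derivatives `∂ᵏh/∂ρᵏ(0,0,0)` are encoded as iterated derivatives of `ρ ↦ h(0,0,ρ)` at `0`,
and `hcheck(x,y) = h(x, y, C·(x²+y²)^{1/N})` (real `N`-th root, via `rpow`). The conclusion:
`hcheck` is smooth away from the origin and `∂hcheck/∂y > 0` on `V ∖ {(0,0)}` for some convex open
neighborhood `V` of the origin. -/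
theorem check_h_partial_pos (N : ℕ) (hN : 2 ≤ N) (m : ℕ) (hm : m = (N + 1) / 2)
    (C : ℝ) (hC : 0 < C)
    (h : ℝ × ℝ × ℝ → ℝ) (hsmooth : ContDiff ℝ (⊤ : ℕ∞) h)
    (hx0 : deriv (fun x : ℝ => h (x, 0, 0)) 0 = 0)
    (hρ : ∀ k, k < m → iteratedDeriv k (fun ρ : ℝ => h (0, 0, ρ)) 0 = 0)
    (hy0odd : Odd N → 0 < deriv (fun y : ℝ => h (0, y, 0)) 0)
    (hy0even : Even N →
      (C ^ m / (m.factorial : ℝ)) * |iteratedDeriv m (fun ρ : ℝ => h (0, 0, ρ)) 0|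
        < deriv (fun y : ℝ => h (0, y, 0)) 0)
    (hcheck : ℝ × ℝ → ℝ)
    (hhcheck : ∀ p : ℝ × ℝ, hcheck p = h (p.1, p.2, C * (p.1 ^ 2 + p.2 ^ 2) ^ ((1 : ℝ) / N))) :
    ContDiffOn ℝ (⊤ : ℕ∞) hcheck {((0 : ℝ), (0 : ℝ))}ᶜ ∧
    ∃ V : Set (ℝ × ℝ), IsOpen V ∧ Convex ℝ V ∧ ((0 : ℝ), (0 : ℝ)) ∈ V ∧
      ∀ p ∈ V \ {((0 : ℝ), (0 : ℝ))}, 0 < deriv (fun y => hcheck (p.1, y)) p.2 := by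
  have hN0 : N ≠ 0 := by omega
  have hNpos : (0 : ℝ) < N := by positivity
  have hm1 : 1 ≤ m := by omega
  have hcheck_eq : hcheck = fun p : ℝ × ℝ => h (p.1, p.2, C * radius N p) := funext hhcheck
  refine ⟨?_, ?_⟩
  · rw [hcheck_eq]
    refine hsmooth.comp_contDiffOn ?_
    refine contDiffOn_fst.prodMk (contDiffOn_snd.prodMk (contDiffOn_const.mul ?_))
    intro p hp
    have hs := sq_add_sq_pos (p := p) hp
    unfold radius
    have hc : ContDiffAt ℝ (⊤ : ℕ∞) (fun p : ℝ × ℝ => p.1 ^ 2 + p.2 ^ 2) p := by fun_prop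
    exact (hc.rpow_const_of_ne hs.ne').contDiffWithinAt
  have hdiff : Differentiable ℝ h := hsmooth.differentiable (by simp)
  have hfd : ContDiff ℝ (⊤ : ℕ∞) (fderiv ℝ h) := hsmooth.fderiv_right (by simp)
  -- `F` and `G` are the partial derivatives of `h` in `ρ` and in `y`.
  set F : ℝ × ℝ × ℝ → ℝ := fun q => fderiv ℝ h q (0, 0, 1) with hF
  set G : ℝ × ℝ × ℝ → ℝ := fun q => fderiv ℝ h q (0, 1, 0) with hG
  have hFs : ContDiff ℝ (⊤ : ℕ∞) F := hfd.clm_apply contDiff_const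
  have hGs : ContDiff ℝ (⊤ : ℕ∞) G := hfd.clm_apply contDiff_const
  have hG0 : deriv (fun y : ℝ => h (0, y, 0)) 0 = G 0 := by
    have h1 : HasDerivAt (fun y : ℝ => ((0 : ℝ), y, (0 : ℝ))) (0, 1, 0) 0 :=
      (hasDerivAt_const _ _).prodMk ((hasDerivAt_id _).prodMk (hasDerivAt_const _ _))
    exact ((hdiff _).hasFDerivAt.comp_hasDerivAt (0 : ℝ) h1).deriv
  have hF0 : deriv (fun ρ : ℝ => h (0, 0, ρ)) = fun ρ => F (0, 0, ρ) := by
    funext ρ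
    have h1 : HasDerivAt (fun y : ℝ => ((0 : ℝ), (0 : ℝ), y)) (0, 0, 1) ρ :=
      (hasDerivAt_const _ _).prodMk ((hasDerivAt_const _ _).prodMk (hasDerivAt_id _))
    exact ((hdiff _).hasFDerivAt.comp_hasDerivAt ρ h1).deriv
  rw [hG0] at hy0odd hy0even
  set A := |iteratedDeriv m (fun ρ : ℝ => h (0, 0, ρ)) 0| with hA
  obtain ⟨n, rfl⟩ : ∃ n, m = n + 1 := ⟨m - 1, by omega⟩
  have hlim : Tendsto (fun r : ℝ => |F (0, 0, r) / r ^ n|) (𝓝[≠] 0) (𝓝 (A / n.factorial)) := by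
    have h1 := tendsto_div_pow_of_iteratedDeriv_eq_zero (u := fun ρ => F (0, 0, ρ))
      (hFs.comp (by fun_prop)) n (fun k hk => by
        rw [← hF0, ← iteratedDeriv_succ']; exact hρ (k + 1) (by omega))
    rw [← hF0, ← iteratedDeriv_succ'] at h1
    have h2 := h1.abs
    rwa [abs_div, Nat.abs_cast] at h2
  -- The asymptotic contribution of `F (0, 0, r) * ∂r/∂y` is `a * (w ^ m / t)`.
  set a := A / n.factorial * (2 / N) * C ^ (n + 1) with ha
  obtain ⟨L, hL0, hLB, hL⟩ := exists_radius_pow_le (a := a) (B := G 0) hN hm (by positivity)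
    hy0odd (fun hE => by
      refine lt_of_eq_of_lt ?_ (hy0even hE)
      have h2 : (N : ℝ) = 2 * (n + 1) := by
        have : N = 2 * (n + 1) := by obtain ⟨k, rfl⟩ := hE; omega
        rw [this]; push_cast; ring
      rw [ha, h2, Nat.factorial_succ]
      push_cast
      field_simp)
  obtain ⟨K, U, hU, hK⟩ := (hFs.contDiffAt (x := 0)).of_le
    (by exact_mod_cast le_top : (1 : WithTop ℕ∞) ≤ ((⊤ : ℕ∞) : WithTop ℕ∞))
    |>.exists_lipschitzOnWith
  have hRc : Continuous fun p : ℝ × ℝ => C * radius N p := (continuous_radius N).const_mul C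
  have hR0 : C * radius N 0 = 0 := by rw [radius_zero hN0, mul_zero]
  have hRt : Tendsto (fun p : ℝ × ℝ => C * radius N p) (𝓝[≠] 0) (𝓝 0) := by
    have := hRc.tendsto 0
    rw [hR0] at this
    exact this.mono_left nhdsWithin_le_nhds
  have hRt' : Tendsto (fun p : ℝ × ℝ => C * radius N p) (𝓝[≠] 0) (𝓝[≠] 0) := by
    refine tendsto_nhdsWithin_iff.2 ⟨hRt, ?_⟩
    filter_upwards [self_mem_nhdsWithin] with p hp
    exact (mul_pos hC (radius_pos N hp)).ne'
  have hQ : Tendsto (fun p : ℝ × ℝ => (p.1, p.2, C * radius N p)) (𝓝[≠] 0) (𝓝 0) := by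
    have hc : Continuous fun p : ℝ × ℝ => (p.1, p.2, C * radius N p) := by fun_prop
    have := hc.tendsto 0
    simp only [hR0] at this
    exact this.mono_left nhdsWithin_le_nhds
  have hQ' : Tendsto (fun p : ℝ × ℝ => ((0 : ℝ), (0 : ℝ), C * radius N p)) (𝓝[≠] 0) (𝓝 0) := by
    have hc : Continuous fun p : ℝ × ℝ => ((0 : ℝ), (0 : ℝ), C * radius N p) := by fun_prop
    have := hc.tendsto 0
    simp only [hR0] at this
    exact this.mono_left nhdsWithin_le_nhds
  -- A lower bound for `∂ȟ/∂y` whose limit at the origin is positive.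
  have hΦ : Tendsto (fun p : ℝ × ℝ => G (p.1, p.2, C * radius N p)
      - |F (0, 0, C * radius N p) / (C * radius N p) ^ n| * (2 / N) * C ^ (n + 1) * L
      - K * (2 / N) * (C * radius N p)) (𝓝[≠] 0) (𝓝 (G 0 - a * L - K * (2 / N) * 0)) :=
    (((hGs.continuous.tendsto 0).comp hQ).sub
      ((((hlim.comp hRt').mul_const _).mul_const _).mul_const _)).sub (hRt.const_mul _)
  have hpos : 0 < G 0 - a * L - K * (2 / N) * 0 := by linarith
  have key : ∀ᶠ p : ℝ × ℝ in 𝓝[≠] 0, 0 < deriv (fun y => hcheck (p.1, y)) p.2 := by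
    filter_upwards [self_mem_nhdsWithin, hΦ.eventually_const_lt hpos, hL, hQ.eventually hU,
      hQ'.eventually hU] with p hp hΦp hLp hU1 hU2
    have hs := sq_add_sq_pos (p := p) hp
    have hw := radius_pos N (p := p) hp
    have hd := hasDerivAt_radius (N := N) (p := p) hp
    have hdle := abs_deriv_radius_le N (p := p) hp
    have hx : |p.1| ≤ √(p.1 ^ 2 + p.2 ^ 2) := Real.abs_le_sqrt (by nlinarith [sq_nonneg p.2])
    have hy : |p.2| ≤ √(p.1 ^ 2 + p.2 ^ 2) := Real.abs_le_sqrt (by nlinarith [sq_nonneg p.1])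
    have ht : 0 < √(p.1 ^ 2 + p.2 ^ 2) := Real.sqrt_pos.2 hs
    set w := radius N p with hwdef
    set t := √(p.1 ^ 2 + p.2 ^ 2) with htdef
    set d := 2 / N * w * p.2 / (p.1 ^ 2 + p.2 ^ 2) with hddef
    set q : ℝ × ℝ × ℝ := (p.1, p.2, C * w) with hq
    have hderiv : deriv (fun y => hcheck (p.1, y)) p.2 = G q + C * d * F q := by
      have h1 : HasDerivAt (fun y : ℝ => (p.1, y, C * radius N (p.1, y))) (0, 1, C * d) p.2 :=
        (hasDerivAt_const _ _).prodMk ((hasDerivAt_id _).prodMk (hd.const_mul C))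
      have h2 : HasDerivAt (fun y => hcheck (p.1, y)) (fderiv ℝ h q (0, 1, C * d)) p.2 := by
        rw [hcheck_eq]
        exact (hdiff q).hasFDerivAt.comp_hasDerivAt p.2 h1
      rw [h2.deriv, hF, hG]
      have h3 : ((0 : ℝ), (1 : ℝ), C * d) = (0, 1, 0) + (C * d) • ((0 : ℝ), (0 : ℝ), (1 : ℝ)) := by
        simp
      rw [h3, map_add, map_smul, smul_eq_mul]
    have hlip : |F q - F (0, 0, C * w)| ≤ K * t := by
      have h1 := hK.dist_le_mul q hU1 _ hU2
      rw [Real.dist_eq] at h1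
      refine h1.trans (mul_le_mul_of_nonneg_left ?_ K.2)
      simp only [hq, Prod.dist_eq, Real.dist_eq, sub_zero, sub_self, abs_zero]
      exact max_le hx (max_le hy ht.le)
    have hFq : |F q| ≤ |F (0, 0, C * w)| + K * t := by
      have := abs_add_le (F q - F (0, 0, C * w)) (F (0, 0, C * w))
      rw [sub_add_cancel] at this
      linarith
    set b := |F (0, 0, C * w) / (C * w) ^ n| with hb
    have hb0 : 0 ≤ b := abs_nonneg _
    have hbF : |F (0, 0, C * w)| = b * (C * w) ^ n := by
      rw [hb, abs_div, abs_of_pos (by positivity : 0 < (C * w) ^ n)]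
      field_simp
    have hbound : |C * d * F q| ≤ b * (2 / N) * C ^ (n + 1) * L + K * (2 / N) * (C * w) := by
      rw [abs_mul, abs_mul, abs_of_pos hC]
      calc C * |d| * |F q| ≤ C * (2 / N * w / t) * (b * (C * w) ^ n + K * t) := by
            rw [← hbF]; gcongr
        _ = b * (2 / N) * C ^ (n + 1) * (w ^ (n + 1) / t) + K * (2 / N) * (C * w) := by
            field_simp
            ring
        _ ≤ _ := by
            gcongr
            exact (div_le_iff₀ ht).2 hLp
    rw [hderiv]
    have := neg_abs_le (C * d * F q)
    linarith
  rw [eventually_nhdsWithin_iff, Metric.eventually_nhds_iff_ball] at key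
  obtain ⟨ε, hε, hball⟩ := key
  exact ⟨Metric.ball 0 ε, Metric.isOpen_ball, convex_ball _ _, Metric.mem_ball_self hε,
    fun p hp => hball p hp.1 hp.2⟩
end

section
/- Let N ≥ 2 be an integer, set m := ⌈N/2⌉, and let C > 0. Let h : ℝ³ → ℝ be a C^∞ function, with coordinates (x, y, ρ), such that: (i) ∂h/∂x(0,0,0) = 0; (ii) ∂ᵏh/∂ρᵏ(0,0,0) = 0 for every integer 0 ≤ k < m; and (iii) ∂h/∂y(0,0,0) > 0 if N is odd, while ∂h/∂y(0,0,0) > (Cᵐ/m!)·|∂ᵐh/∂ρᵐ(0,0,0)| if N is even. Define ȟ : ℝ² → ℝ by ȟ(x,y) := h(x, y, C·(x²+y²)^{1/N}) and Ψ : ℝ² → ℝ² by Ψ(x,y) := (x, ȟ(x,y)). Then there exists an open neighborhood U of (0,0) such that: Ψ is injective on U; Ψ(U) is open in ℝ²; Ψ : U → Ψ(U) is a homeomorphism; Ψ restricts to a C^∞ diffeomorphism from U ∖ {(0,0)} onto the open set Ψ(U) ∖ {Ψ(0,0)}; and for every (a,b) ∈ Ψ(U), ȟ(Ψ⁻¹(a,b))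 = b. -/
/-!
Write `s = x² + y²`, `ρ = C s^{1/N}` and `f(x,y) = h(x,y,ρ)`. Everything rests on `∂f/∂y > 0` on a
punctured neighbourhood of the origin (`deriv_y_pos`). Off the origin,
`∂f/∂y = h_y + h_ρ · ∂ρ/∂y` with `|∂ρ/∂y| ≤ (2C/N) s^{1/N - 1/2}`, which blows up at the origin when
`N > 2`. The vanishing of the `ρ`-derivatives of `h` compensates for this: for every
`A > |∂ᵐh/∂ρᵐ(0)| / (m-1)!`, Taylor's formula gives `|h_ρ(0,0,ρ)| ≤ A ρ^{m-1}` for small `ρ > 0`,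
and `h_ρ(x,y,ρ)` differs from `h_ρ(0,0,ρ)` by at most `K s^{1/2}`, so that
`|h_ρ · ∂ρ/∂y| ≤ (2C/N) (K s^{1/N} + A C^{m-1} s^{m/N - 1/2})`.
If `N` is odd, both powers of `s` are positive and the bound tends to `0 < h_y(0)`. If `N` is even,
then `m/N = 1/2` and `2/N = 1/m`, and the bound tends to `(Cᵐ/m) A`, which is less than `h_y(0)`
for `A` close enough to `|∂ᵐh/∂ρᵐ(0)| / (m-1)!`.

Hence on a small square `y ↦ f(x,y)` is strictly increasing for every `x`; for `x = 0` the intervals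
on the two sides of `y = 0` are glued by continuity. So `Ψ(x,y) = (x, f(x,y))` is injective there,
and it is open by the intermediate value theorem in `y` and continuity in `x`
(`isOpen_image_shear`). Away from the origin `DΨ` is invertible because `∂f/∂y ≠ 0`, and the
inverse function theorem makes the inverse smooth (`contDiffAt_symm_of_shear`).
-/

open Set Filter Topology

/-- If `g` vanishes to order `n` at `0`, then `|g t| ≤ A tⁿ` for small `t > 0`, for any constant `A`
strictly larger than the absolute value of the `n`-th Taylor coefficient. -/
lemma eventually_abs_le_pow {g : ℝ → ℝ} (hg : ContDiff ℝ (⊤ : ℕ∞) g) (n : ℕ)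
    (hvan : ∀ k < n, iteratedDeriv k g 0 = 0) {A : ℝ}
    (hA : |iteratedDeriv n g 0| / n.factorial < A) :
    ∀ᶠ t in 𝓝[>] (0 : ℝ), |g t| ≤ A * t ^ n := by
  have hT := taylor_isLittleO_univ (x₀ := 0) (n := n) (hg.of_le (by exact_mod_cast le_top))
  have hval : ∀ t, taylorWithinEval g n univ 0 t = iteratedDeriv n g 0 / n.factorial * t ^ n := by
    intro t
    rw [taylor_within_apply, Finset.sum_range_succ, Finset.sum_eq_zero]
    · simp [iteratedDerivWithin_univ]; ring
    · intro k hk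
      simp [iteratedDerivWithin_univ, hvan k (Finset.mem_range.mp hk)]
  have hb := (hT.def (sub_pos.mpr hA)).filter_mono (nhdsWithin_le_nhds (s := Ioi 0))
  filter_upwards [hb, self_mem_nhdsWithin] with t ht ht0
  have ht0 : 0 < t := ht0
  have hp : 0 < t ^ n := pow_pos ht0 n
  rw [hval] at ht
  simp only [sub_zero, Real.norm_eq_abs, abs_of_pos hp] at ht
  have h1 : |iteratedDeriv n g 0 / n.factorial * t ^ n|
      = |iteratedDeriv n g 0| / n.factorial * t ^ n := by
    rw [abs_mul, abs_div, abs_of_pos hp, Nat.abs_cast]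
  have h2 := abs_sub_abs_le_abs_sub (g t) (iteratedDeriv n g 0 / n.factorial * t ^ n)
  rw [h1] at h2
  linarith

/-- If `f` is continuous and strictly increasing in `y` on the square `I ×ˢ I`, then
`(x, y) ↦ (x, f (x, y))` maps open subsets of the square to open sets: around `(x₀, y₀)` the values
`f (x, y₀ ± ε)` enclose all values near `f (x₀, y₀)` for `x` near `x₀`. -/
lemma isOpen_image_shear {f : ℝ × ℝ → ℝ} (hf : Continuous f) {I : Set ℝ}
    (hmono : ∀ x ∈ I, StrictMonoOn (fun y => f (x, y)) I) {V : Set (ℝ × ℝ)} (hV : IsOpen V)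
    (hVI : V ⊆ I ×ˢ I) : IsOpen ((fun p : ℝ × ℝ => (p.1, f p)) '' V) := by
  rw [isOpen_iff_mem_nhds]
  rintro _ ⟨⟨x₀, y₀⟩, hp, rfl⟩
  obtain ⟨ε, hε, hball⟩ := Metric.nhds_basis_closedBall.mem_iff.mp (hV.mem_nhds hp)
  rw [← closedBall_prod_same] at hball
  have hVx : ∀ x ∈ Metric.closedBall x₀ ε, ∀ y ∈ Icc (y₀ - ε) (y₀ + ε), (x, y) ∈ V := by
    intro x hx y hy
    exact hball ⟨hx, by rwa [Real.closedBall_eq_Icc]⟩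
  have hx₀ : x₀ ∈ Metric.closedBall x₀ ε := Metric.mem_closedBall_self hε.le
  have hI : ∀ y ∈ Icc (y₀ - ε) (y₀ + ε), y ∈ I := fun y hy => (hVI (hVx x₀ hx₀ y hy)).2
  have hx₀I : x₀ ∈ I := (hVI hp).1
  have hlo : f (x₀, y₀ - ε) < f (x₀, y₀) :=
    hmono x₀ hx₀I (hI _ ⟨by linarith, by linarith⟩) (hI _ ⟨by linarith, by linarith⟩) (by linarith)
  have hhi : f (x₀, y₀) < f (x₀, y₀ + ε) :=
    hmono x₀ hx₀I (hI _ ⟨by linarith, by linarith⟩) (hI _ ⟨by linarith, by linarith⟩) (by linarith)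
  have e1 : ∀ᶠ q : ℝ × ℝ in 𝓝 (x₀, f (x₀, y₀)), f (q.1, y₀ - ε) < q.2 :=
    (isOpen_lt (by fun_prop) (by fun_prop)).mem_nhds hlo
  have e2 : ∀ᶠ q : ℝ × ℝ in 𝓝 (x₀, f (x₀, y₀)), q.2 < f (q.1, y₀ + ε) :=
    (isOpen_lt (by fun_prop) (by fun_prop)).mem_nhds hhi
  have e3 : ∀ᶠ q : ℝ × ℝ in 𝓝 (x₀, f (x₀, y₀)), q.1 ∈ Metric.closedBall x₀ ε :=
    continuous_fst.continuousAt.eventually (Metric.closedBall_mem_nhds x₀ hε)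
  filter_upwards [e1, e2, e3] with q h1 h2 h3
  obtain ⟨y, hy, hyq⟩ := intermediate_value_Icc (f := fun y => f (q.1, y))
    (show y₀ - ε ≤ y₀ + ε by linarith) (by fun_prop) ⟨h1.le, h2.le⟩
  exact ⟨(q.1, y), hVx _ h3 _ hy, Prod.ext rfl hyq⟩

/-- The coefficient `A` can be chosen so that the bound for `h_ρ · ∂ρ/∂y` has a limit `ℓ < D` as
`s → 0⁺`. Here `D` plays the role of `∂h/∂y(0,0,0)` and `a` that of `∂ᵐh/∂ρᵐ(0,0,0)`. The choice
does not depend on the Lipschitz constant `K`, whose term vanishes in the limit. -/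
lemma exists_coeff_and_limit {N m : ℕ} (hN : 2 ≤ N) (hm : m = (N + 1) / 2) {C D a : ℝ}
    (hodd : Odd N → 0 < D) (heven : Even N → C ^ m / (m.factorial : ℝ) * |a| < D) :
    ∃ A ℓ : ℝ, |a| / ((m - 1).factorial : ℝ) < A ∧ ℓ < D ∧ ∀ K : ℝ,
      Tendsto (fun s : ℝ => 2 * C / N * (K * s ^ ((1 : ℝ) / N) +
        A * C ^ (m - 1) * s ^ ((m : ℝ) / N - 1 / 2))) (𝓝[>] 0) (𝓝 ℓ) := by
  have hN0 : (0 : ℝ) < N := by positivity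
  have hpow : ∀ e : ℝ, 0 < e → Tendsto (fun s : ℝ => s ^ e) (𝓝[>] 0) (𝓝 0) := by
    intro e he
    have := (Real.continuousAt_rpow_const 0 e (Or.inr he.le)).tendsto
    rw [Real.zero_rpow he.ne'] at this
    exact this.mono_left nhdsWithin_le_nhds
  have h1 := hpow (1 / N) (by positivity)
  obtain ⟨n, rfl⟩ : ∃ n, m = n + 1 := ⟨m - 1, by omega⟩
  simp only [Nat.add_sub_cancel]
  rcases Nat.even_or_odd N with hE | hO
  · have hNm : (N : ℝ) = 2 * (n + 1) := by
      obtain ⟨k, hk⟩ := hE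
      have : N = 2 * (n + 1) := by omega
      exact_mod_cast this
    have hexp : ((n + 1 : ℕ) : ℝ) / N - 1 / 2 = 0 := by
      rw [hNm]; push_cast; field_simp; ring
    have hlim : Tendsto (fun A : ℝ => 2 * C / N * (A * C ^ n))
        (𝓝[>] (|a| / (n.factorial : ℝ))) (𝓝 (2 * C / N * (|a| / (n.factorial : ℝ) * C ^ n))) :=
      (by fun_prop : Continuous fun A : ℝ => 2 * C / N * (A * C ^ n)).continuousAt.tendsto.mono_left
        nhdsWithin_le_nhds
    have hlt : 2 * C / N * (|a| / (n.factorial : ℝ) * C ^ n) < D := by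
      convert heven hE using 1
      rw [hNm, Nat.factorial_succ]; push_cast; field_simp; ring
    obtain ⟨A, hAD, hA⟩ := ((hlim.eventually_lt_const hlt).and self_mem_nhdsWithin).exists
    refine ⟨A, _, hA, hAD, fun K => ?_⟩
    simp only [hexp, Real.rpow_zero]
    simpa using ((h1.const_mul K).add_const (A * C ^ n * 1)).const_mul (2 * C / N)
  · have hNm : (N : ℝ) = 2 * (n + 1) - 1 := by
      obtain ⟨k, hk⟩ := hO
      have : N + 1 = 2 * (n + 1) := by omega
      have : (N : ℝ) + 1 = 2 * (n + 1) := by exact_mod_cast this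
      linarith
    have hexp : 0 < ((n + 1 : ℕ) : ℝ) / N - 1 / 2 := by
      rw [sub_pos, div_lt_div_iff₀ (by norm_num) hN0]; push_cast; linarith
    refine ⟨|a| / n.factorial + 1, 0, by linarith, hodd hO, fun K => ?_⟩
    simpa using ((h1.const_mul K).add ((hpow _ hexp).const_mul
      ((|a| / n.factorial + 1) * C ^ n))).const_mul (2 * C / N)

/-- The function `ρ(x,y) = C (x² + y²)^{1/N}` substituted for the third variable of `h`. -/
noncomputable def rootRadius (N : ℕ) (C : ℝ) (p : ℝ × ℝ) : ℝ :=
  C * (p.1 ^ 2 + p.2 ^ 2) ^ ((1 : ℝ) / N)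

lemma sq_add_sq_pos_of_ne {p : ℝ × ℝ} (hp : p ≠ (0, 0)) : 0 < p.1 ^ 2 + p.2 ^ 2 := by
  rcases p with ⟨x, y⟩
  by_cases hx : x = 0
  · have hy : y ≠ 0 := fun hy => hp (by rw [hx, hy])
    positivity
  · positivity

lemma continuous_rootRadius (N : ℕ) (C : ℝ) : Continuous (rootRadius N C) :=
  continuous_const.mul ((by fun_prop : Continuous fun p : ℝ × ℝ => p.1 ^ 2 + p.2 ^ 2).rpow_const
    fun _ => Or.inr (by positivity))

lemma contDiffAt_rootRadius (N : ℕ) (C : ℝ) {p : ℝ × ℝ} (hp : p ≠ (0, 0)) :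
    ContDiffAt ℝ (⊤ : ℕ∞) (rootRadius N C) p :=
  contDiffAt_const.mul ((by fun_prop : ContDiffAt ℝ (⊤ : ℕ∞)
    (fun p : ℝ × ℝ => p.1 ^ 2 + p.2 ^ 2) p).rpow_const_of_ne (sq_add_sq_pos_of_ne hp).ne')

lemma hasDerivAt_rootRadius (N : ℕ) (C : ℝ) {p : ℝ × ℝ} (hp : p ≠ (0, 0)) :
    HasDerivAt (fun y => rootRadius N C (p.1, y))
      (C * (2 * p.2 / N * (p.1 ^ 2 + p.2 ^ 2) ^ ((1 : ℝ) / N - 1))) p.2 := by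
  have h1 : HasDerivAt (fun y : ℝ => p.1 ^ 2 + y ^ 2) (2 * p.2) p.2 := by
    simpa using (hasDerivAt_pow 2 p.2).const_add (p.1 ^ 2)
  have h2 := (h1.rpow_const (p := (1 : ℝ) / N) (Or.inl (sq_add_sq_pos_of_ne hp).ne')).const_mul C
  exact h2.congr_deriv (by ring)

/-- Near the origin, but not at it, `y ↦ h (x, y, C (x² + y²)^{1/N})` has positive derivative. -/
lemma deriv_y_pos {N m : ℕ} (hN : 2 ≤ N) (hm : m = (N + 1) / 2) {C : ℝ} (hC : 0 < C)
    {h : ℝ × ℝ × ℝ → ℝ} (hsmooth : ContDiff ℝ (⊤ : ℕ∞) h)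
    (hρ : ∀ k, k < m → iteratedDeriv k (fun ρ : ℝ => h (0, 0, ρ)) 0 = 0)
    (hodd : Odd N → 0 < deriv (fun y : ℝ => h (0, y, 0)) 0)
    (heven : Even N →
      (C ^ m / (m.factorial : ℝ)) * |iteratedDeriv m (fun ρ : ℝ => h (0, 0, ρ)) 0|
        < deriv (fun y : ℝ => h (0, y, 0)) 0) :
    ∀ᶠ p : ℝ × ℝ in 𝓝 (0, 0), p ≠ (0, 0) →
      0 < deriv (fun y => h (p.1, y, rootRadius N C (p.1, y))) p.2 := by
  have hdiff : Differentiable ℝ h := hsmooth.differentiable (by simp)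
  -- `Fy` and `Fr` are the partial derivatives of `h` in `y` and in `ρ`.
  set Fy : ℝ × ℝ × ℝ → ℝ := fun q => fderiv ℝ h q (0, 1, 0) with hFy
  set Fr : ℝ × ℝ × ℝ → ℝ := fun q => fderiv ℝ h q (0, 0, 1) with hFr
  have hFys : ContDiff ℝ (⊤ : ℕ∞) Fy :=
    (hsmooth.fderiv_right (by simp)).clm_apply contDiff_const
  have hFrs : ContDiff ℝ (⊤ : ℕ∞) Fr :=
    (hsmooth.fderiv_right (by simp)).clm_apply contDiff_const
  have hD : deriv (fun y : ℝ => h (0, y, 0)) 0 = Fy (0, 0, 0) := by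
    have hc : HasDerivAt (fun y : ℝ => ((0 : ℝ), y, (0 : ℝ))) (0, 1, 0) 0 :=
      (hasDerivAt_const _ _).prodMk ((hasDerivAt_id _).prodMk (hasDerivAt_const _ _))
    exact ((hdiff (0, 0, 0)).hasFDerivAt.comp_hasDerivAt (0 : ℝ) hc).deriv
  have hg : deriv (fun ρ : ℝ => h (0, 0, ρ)) = fun t => Fr (0, 0, t) := by
    funext t
    have hc : HasDerivAt (fun t : ℝ => ((0 : ℝ), (0 : ℝ), t)) (0, 0, 1) t :=
      (hasDerivAt_const _ _).prodMk ((hasDerivAt_const _ _).prodMk (hasDerivAt_id _))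
    exact ((hdiff (0, 0, t)).hasFDerivAt.comp_hasDerivAt t hc).deriv
  obtain ⟨n, rfl⟩ : ∃ n, m = n + 1 := ⟨m - 1, by omega⟩
  obtain ⟨A, ℓ, hA, hℓ, hlim⟩ := exists_coeff_and_limit hN hm hodd heven
  simp only [Nat.add_sub_cancel] at hA hlim
  rw [iteratedDeriv_succ', hg] at hA
  have hgs : ContDiff ℝ (⊤ : ℕ∞) fun t : ℝ => Fr (0, 0, t) := by fun_prop
  have hgpow := eventually_abs_le_pow hgs n (fun k hk => by
    rw [← hg, ← iteratedDeriv_succ']; exact hρ (k + 1) (by omega)) hA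
  obtain ⟨K, t, ht, hK⟩ :=
    (hFrs.contDiffAt (x := (0, 0, 0))).of_le (m := 1) (by exact_mod_cast le_top)
      |>.exists_lipschitzOnWith
  have hR := continuous_rootRadius N C
  have hR0 : rootRadius N C (0, 0) = 0 := by
    have : (N : ℝ) ≠ 0 := by positivity
    simp [rootRadius, this]
  have hs : Tendsto (fun p : ℝ × ℝ => p.1 ^ 2 + p.2 ^ 2) (𝓝[≠] (0, 0)) (𝓝[>] 0) := by
    refine tendsto_nhdsWithin_iff.mpr ⟨?_, ?_⟩
    · have := (by fun_prop : Continuous fun p : ℝ × ℝ => p.1 ^ 2 + p.2 ^ 2).tendsto (0, 0)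
      simp only [ne_eq, OfNat.ofNat_ne_zero, not_false_eq_true, zero_pow, add_zero] at this
      exact this.mono_left nhdsWithin_le_nhds
    · filter_upwards [self_mem_nhdsWithin] with p hp using sq_add_sq_pos_of_ne hp
  have hRpos : ∀ p : ℝ × ℝ, p ≠ (0, 0) → 0 < rootRadius N C p := fun p hp =>
    mul_pos hC (Real.rpow_pos_of_pos (sq_add_sq_pos_of_ne hp) _)
  have hRt : Tendsto (rootRadius N C) (𝓝[≠] (0, 0)) (𝓝[>] 0) := by
    refine tendsto_nhdsWithin_iff.mpr ⟨?_, ?_⟩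
    · have := hR.tendsto (0, 0)
      rw [hR0] at this
      exact this.mono_left nhdsWithin_le_nhds
    · filter_upwards [self_mem_nhdsWithin] with p hp using hRpos p hp
  have c1 : Continuous fun p : ℝ × ℝ => (p.1, p.2, rootRadius N C p) := by fun_prop
  have c2 : Continuous fun p : ℝ × ℝ => ((0 : ℝ), (0 : ℝ), rootRadius N C p) := by fun_prop
  have e1 : ∀ᶠ p : ℝ × ℝ in 𝓝[≠] (0, 0), (p.1, p.2, rootRadius N C p) ∈ t :=
    (c1.tendsto' (0, 0) (0, 0, 0) (by simp [hR0])).mono_left nhdsWithin_le_nhds |>.eventually ht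
  have e2 : ∀ᶠ p : ℝ × ℝ in 𝓝[≠] (0, 0), ((0 : ℝ), (0 : ℝ), rootRadius N C p) ∈ t :=
    (c2.tendsto' (0, 0) (0, 0, 0) (by simp [hR0])).mono_left nhdsWithin_le_nhds |>.eventually ht
  have e3 := hRt.eventually hgpow
  have e4 : ∀ᶠ p : ℝ × ℝ in 𝓝[≠] (0, 0),
      2 * C / N * (K * (p.1 ^ 2 + p.2 ^ 2) ^ ((1 : ℝ) / N) + A * C ^ n *
        (p.1 ^ 2 + p.2 ^ 2) ^ (((n + 1 : ℕ) : ℝ) / N - 1 / 2))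
      < Fy (p.1, p.2, rootRadius N C p) := by
    have l1 := (hlim K).comp hs
    have l2 : Tendsto (fun p : ℝ × ℝ => Fy (p.1, p.2, rootRadius N C p)) (𝓝[≠] (0, 0))
        (𝓝 (Fy (0, 0, 0))) :=
      ((hFys.continuous.comp c1).tendsto' (0, 0) _ (by simp [hR0])).mono_left nhdsWithin_le_nhds
    exact l1.eventually_lt l2 (hD ▸ hℓ)
  refine (eventually_nhdsWithin_iff (s := {((0 : ℝ), (0 : ℝ))}ᶜ)).mp ?_
  filter_upwards [e1, e2, e3, e4, self_mem_nhdsWithin] with p h1 h2 h3 h4 hp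
  have hp : p ≠ (0, 0) := hp
  have hsp := sq_add_sq_pos_of_ne hp
  have hN0 : (0 : ℝ) < N := by positivity
  have hder : HasDerivAt (fun y => h (p.1, y, rootRadius N C (p.1, y)))
      (Fy (p.1, p.2, rootRadius N C p) + C * (2 * p.2 / N * (p.1 ^ 2 + p.2 ^ 2) ^ ((1 : ℝ) / N - 1))
        * Fr (p.1, p.2, rootRadius N C p)) p.2 := by
    have hc := (hasDerivAt_const p.2 p.1).prodMk
      ((hasDerivAt_id p.2).prodMk (hasDerivAt_rootRadius N C hp))
    have := (hdiff (p.1, p.2, rootRadius N C p)).hasFDerivAt.comp_hasDerivAt p.2 hc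
    refine this.congr_deriv ?_
    simp only [hFy, hFr]
    generalize C * (2 * p.2 / N * (p.1 ^ 2 + p.2 ^ 2) ^ ((1 : ℝ) / N - 1)) = c
    rw [← smul_eq_mul, ← map_smul, ← map_add]
    simp
  rw [hder.deriv]
  set s := p.1 ^ 2 + p.2 ^ 2 with hs_def
  set r := rootRadius N C p with hr_def
  have hFrb : |Fr (p.1, p.2, r)| ≤ K * s ^ ((1 : ℝ) / 2) + A * r ^ n := by
    have hl := hK.dist_le_mul _ h1 _ h2
    have hdist : dist (p.1, p.2, r) ((0 : ℝ), (0 : ℝ), r) ≤ s ^ ((1 : ℝ) / 2) := by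
      rw [← Real.sqrt_eq_rpow, Prod.dist_eq, Prod.dist_eq]
      simp only [dist_self, Real.dist_eq, sub_zero]
      refine max_le (Real.abs_le_sqrt ?_) (max_le (Real.abs_le_sqrt ?_) (Real.sqrt_nonneg _))
      · nlinarith [sq_nonneg p.2]
      · nlinarith [sq_nonneg p.1]
    have := mul_le_mul_of_nonneg_left hdist K.coe_nonneg
    rw [Real.dist_eq] at hl
    have := abs_sub_abs_le_abs_sub (Fr (p.1, p.2, r)) (Fr (0, 0, r))
    linarith
  have hyb : |C * (2 * p.2 / N * s ^ ((1 : ℝ) / N - 1))|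
      ≤ 2 * C / N * s ^ ((1 : ℝ) / N - 1 / 2) := by
    have hy : |p.2| ≤ s ^ ((1 : ℝ) / 2) := by
      rw [← Real.sqrt_eq_rpow]
      exact Real.abs_le_sqrt (by nlinarith [sq_nonneg p.1])
    have hexp : s ^ ((1 : ℝ) / N - 1 / 2) = s ^ ((1 : ℝ) / 2) * s ^ ((1 : ℝ) / N - 1) := by
      rw [← Real.rpow_add hsp]; congr 1; ring
    have hpos := Real.rpow_pos_of_pos hsp ((1 : ℝ) / N - 1)
    rw [abs_mul, abs_mul, abs_div, abs_mul, abs_of_pos hC, abs_of_pos hN0, abs_of_pos hpos, hexp,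
      abs_of_pos (two_pos)]
    calc C * (2 * |p.2| / N * s ^ ((1 : ℝ) / N - 1))
        = 2 * C / N * (|p.2| * s ^ ((1 : ℝ) / N - 1)) := by ring
      _ ≤ _ := by gcongr
  have hprod : |C * (2 * p.2 / N * s ^ ((1 : ℝ) / N - 1)) * Fr (p.1, p.2, r)|
      ≤ 2 * C / N * (K * s ^ ((1 : ℝ) / N) + A * C ^ n * s ^ (((n + 1 : ℕ) : ℝ) / N - 1 / 2)) := by
    rw [abs_mul]
    refine (mul_le_mul hyb hFrb (abs_nonneg _) (by positivity)).trans_eq ?_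
    have x1 : s ^ ((1 : ℝ) / N) = s ^ ((1 : ℝ) / N - 1 / 2) * s ^ ((1 : ℝ) / 2) := by
      rw [← Real.rpow_add hsp]; congr 1; ring
    have x2 : s ^ (((n + 1 : ℕ) : ℝ) / N - 1 / 2)
        = s ^ ((1 : ℝ) / N - 1 / 2) * (s ^ ((1 : ℝ) / N)) ^ n := by
      rw [← Real.rpow_mul_natCast hsp.le, ← Real.rpow_add hsp]
      congr 1; push_cast; ring
    have x3 : r ^ n = C ^ n * (s ^ ((1 : ℝ) / N)) ^ n := by
      rw [hr_def, rootRadius, mul_pow]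
    rw [x2, x3]
    nth_rewrite 2 [x1]
    ring
  have := neg_abs_le (C * (2 * p.2 / N * s ^ ((1 : ℝ) / N - 1)) * Fr (p.1, p.2, r))
  linarith

/-- The inverse of a local homeomorphism `(x, y) ↦ (x, f (x, y))` is smooth at each point over which
`f` is smooth with `∂f/∂y > 0`. -/
lemma contDiffAt_symm_of_shear (e : OpenPartialHomeomorph (ℝ × ℝ) (ℝ × ℝ)) {f : ℝ × ℝ → ℝ}
    (he : ∀ p, e p = (p.1, f p)) {q : ℝ × ℝ} (hq : q ∈ e.target)
    (hf : ContDiffAt ℝ (⊤ : ℕ∞) f (e.symm q))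
    (hpos : 0 < deriv (fun y => f ((e.symm q).1, y)) (e.symm q).2) :
    ContDiffAt ℝ (⊤ : ℕ∞) e.symm q := by
  set p := e.symm q
  have hfd : HasFDerivAt f (fderiv ℝ f p) p := (hf.differentiableAt (by simp)).hasFDerivAt
  set L := fderiv ℝ f p
  have hL : deriv (fun y => f (p.1, y)) p.2 = L (0, 1) := by
    have hc : HasDerivAt (fun y : ℝ => (p.1, y)) (0, 1) p.2 :=
      (hasDerivAt_const _ _).prodMk (hasDerivAt_id _)
    exact (hfd.comp_hasDerivAt p.2 hc).deriv
  have hinj : Function.Injective ((ContinuousLinearMap.fst ℝ ℝ ℝ).prod L) := by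
    rw [injective_iff_map_eq_zero]
    rintro ⟨a, b⟩ hab
    obtain ⟨ha, hb⟩ := Prod.mk.inj hab
    have ha : a = 0 := ha
    subst ha
    have hb : L (0, b) = 0 := hb
    have : L ((0 : ℝ), b) = b * L (0, 1) := by
      rw [← smul_eq_mul, ← map_smul]; simp
    rw [this, ← hL] at hb
    rw [(mul_eq_zero.mp hb).resolve_right hpos.ne']
    rfl
  have hee : (e : ℝ × ℝ → ℝ × ℝ) = fun p => (p.1, f p) := funext he
  refine e.contDiffAt_symm (f₀' := (LinearEquiv.ofInjectiveEndo
    (((ContinuousLinearMap.fst ℝ ℝ ℝ).prod L : ℝ × ℝ →L[ℝ] ℝ × ℝ) : ℝ × ℝ →ₗ[ℝ] ℝ × ℝ)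
    hinj).toContinuousLinearEquiv) hq ?_ ?_
  · rw [hee]
    exact (hasFDerivAt_fst.prodMk hfd).congr_fderiv (by ext <;> rfl)
  · rw [hee]
    exact contDiffAt_fst.prodMk hf

/-- Conclusion of Proposition 4.2 of the paper in the coordinates on the reduced space
given by the defining polynomial. Here `m = ⌈N/2⌉ = (N+1)/2` (natural division), the pure
partial derivatives `∂ᵏh/∂ρᵏ(0,0,0)` are encoded as iterated derivatives of `ρ ↦ h(0,0,ρ)`
at `0`, `hcheck(x,y) = h(x, y, C·(x²+y²)^{1/N})` (real `N`-th root, via `rpow`) and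
`Ψ(x,y) = (x, hcheck(x,y))`. The conclusion: on some open neighborhood `U` of the origin,
`Ψ` is injective, `Ψ(U)` is open, `Ψ` is a homeomorphism onto `Ψ(U)` (with inverse `G`),
restricts to a smooth diffeomorphism from `U ∖ {(0,0)}` onto `Ψ(U) ∖ {Ψ(0,0)}`, and
`hcheck(Ψ⁻¹(a,b)) = b` for all `(a,b) ∈ Ψ(U)`. -/
theorem ephemeral_normal_form (N : ℕ) (hN : 2 ≤ N) (m : ℕ) (hm : m = (N + 1) / 2)
    (C : ℝ) (hC : 0 < C)
    (h : ℝ × ℝ × ℝ → ℝ) (hsmooth : ContDiff ℝ (⊤ : ℕ∞) h)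
    (hx0 : deriv (fun x : ℝ => h (x, 0, 0)) 0 = 0)
    (hρ : ∀ k, k < m → iteratedDeriv k (fun ρ : ℝ => h (0, 0, ρ)) 0 = 0)
    (hy0odd : Odd N → 0 < deriv (fun y : ℝ => h (0, y, 0)) 0)
    (hy0even : Even N →
      (C ^ m / (m.factorial : ℝ)) * |iteratedDeriv m (fun ρ : ℝ => h (0, 0, ρ)) 0|
        < deriv (fun y : ℝ => h (0, y, 0)) 0)
    (hcheck : ℝ × ℝ → ℝ)
    (hhcheck : ∀ p : ℝ × ℝ, hcheck p = h (p.1, p.2, C * (p.1 ^ 2 + p.2 ^ 2) ^ ((1 : ℝ) / N)))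
    (Ψ : ℝ × ℝ → ℝ × ℝ) (hΨ : ∀ p : ℝ × ℝ, Ψ p = (p.1, hcheck p)) :
    ∃ U : Set (ℝ × ℝ), IsOpen U ∧ ((0 : ℝ), (0 : ℝ)) ∈ U ∧
      Set.InjOn Ψ U ∧ IsOpen (Ψ '' U) ∧ ContinuousOn Ψ U ∧
      ∃ G : ℝ × ℝ → ℝ × ℝ,
        ContinuousOn G (Ψ '' U) ∧
        (∀ p ∈ U, G (Ψ p) = p) ∧ (∀ q ∈ Ψ '' U, Ψ (G q) = q) ∧
        Ψ '' (U \ {((0 : ℝ), (0 : ℝ))}) = Ψ '' U \ {Ψ ((0 : ℝ), (0 : ℝ))} ∧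
        ContDiffOn ℝ (⊤ : ℕ∞) Ψ (U \ {((0 : ℝ), (0 : ℝ))}) ∧
        ContDiffOn ℝ (⊤ : ℕ∞) G (Ψ '' U \ {Ψ ((0 : ℝ), (0 : ℝ))}) ∧
        ∀ q ∈ Ψ '' U, hcheck (G q) = q.2 := by
  obtain rfl : hcheck = fun p => h (p.1, p.2, rootRadius N C p) := funext hhcheck
  obtain rfl : Ψ = fun p => (p.1, h (p.1, p.2, rootRadius N C p)) := funext hΨ
  set f : ℝ × ℝ → ℝ := fun p => h (p.1, p.2, rootRadius N C p) with hf_def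
  have hR := continuous_rootRadius N C
  have hh := hsmooth.continuous
  have hf : Continuous f := by fun_prop
  have hfs : ∀ p : ℝ × ℝ, p ≠ (0, 0) → ContDiffAt ℝ (⊤ : ℕ∞) f p := fun p hp =>
    hsmooth.contDiffAt.comp p
      (contDiffAt_fst.prodMk (contDiffAt_snd.prodMk (contDiffAt_rootRadius N C hp)))
  obtain ⟨δ, hδ, hpos⟩ := Metric.eventually_nhds_iff_ball.mp
    (deriv_y_pos hN hm hC hsmooth hρ hy0odd hy0even)
  rw [← ball_prod_same, Real.ball_eq_Ioo, zero_sub, zero_add] at hpos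
  set I := Ioo (-δ) δ with hI
  have hposf : ∀ p ∈ I ×ˢ I, p ≠ (0, 0) → 0 < deriv (fun y => f (p.1, y)) p.2 := hpos
  have h0I : (0 : ℝ) ∈ I := ⟨by linarith, hδ⟩
  -- The interval is cut at `y = 0`, since `f` need not be differentiable at the origin.
  have hmono : ∀ x ∈ I, StrictMonoOn (fun y => f (x, y)) I := by
    intro x hx
    have hlo : StrictMonoOn (fun y => f (x, y)) (Ioc (-δ) 0) := by
      refine strictMonoOn_of_deriv_pos (convex_Ioc _ _) (by fun_prop) fun y hy => ?_
      rw [interior_Ioc] at hy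
      exact hposf (x, y) ⟨hx, hy.1, hy.2.trans hδ⟩ fun h0 => hy.2.ne (congrArg Prod.snd h0)
    have hhi : StrictMonoOn (fun y => f (x, y)) (Ico 0 δ) := by
      refine strictMonoOn_of_deriv_pos (convex_Ico _ _) (by fun_prop) fun y hy => ?_
      rw [interior_Ico] at hy
      exact hposf (x, y) ⟨hx, by linarith [hy.1], hy.2⟩
        fun h0 => hy.1.ne' (congrArg Prod.snd h0)
    have := hlo.union hhi (c := 0) ⟨⟨by linarith, le_rfl⟩, fun y hy => hy.2⟩
      ⟨⟨le_rfl, hδ⟩, fun y hy => hy.1⟩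
    rwa [Ioc_union_Ico_eq_Ioo (by linarith) hδ] at this
  set Ψ : ℝ × ℝ → ℝ × ℝ := fun p => (p.1, f p) with hΨ_def
  have hU : IsOpen (I ×ˢ I) := isOpen_Ioo.prod isOpen_Ioo
  have hΨc : Continuous Ψ := by fun_prop
  have hinj : InjOn Ψ (I ×ˢ I) := by
    rintro ⟨x, y⟩ hp ⟨x', y'⟩ hp' heq
    obtain ⟨h1, h2⟩ := Prod.mk.inj heq
    have h1 : x = x' := h1
    subst h1
    exact Prod.ext rfl ((hmono x hp.1).injOn hp.2 hp'.2 h2)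
  have hopen : IsOpenMap ((I ×ˢ I).domRestrict Ψ) := by
    intro V hV
    have : (I ×ˢ I).domRestrict Ψ '' V = Ψ '' (Subtype.val '' V) := by
      rw [image_image]; rfl
    rw [this]
    exact isOpen_image_shear hf hmono (hU.isOpenMap_subtype_val V hV) (by simp)
  let e : OpenPartialHomeomorph (ℝ × ℝ) (ℝ × ℝ) :=
    OpenPartialHomeomorph.ofContinuousOpenRestrict (hinj.toPartialEquiv Ψ (I ×ˢ I))
      hΨc.continuousOn hopen hU
  have hleft : ∀ p ∈ I ×ˢ I, e.symm (Ψ p) = p := fun p hp => e.left_inv hp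
  have hright : ∀ q ∈ Ψ '' (I ×ˢ I), Ψ (e.symm q) = q := fun q hq => e.right_inv hq
  refine ⟨I ×ˢ I, hU, ⟨h0I, h0I⟩, hinj, e.open_target, hΨc.continuousOn, e.symm,
    e.continuousOn_symm, hleft, hright, ?_, ?_, ?_, ?_⟩
  · rw [hinj.image_sdiff_subset (by simpa using h0I), image_singleton]
  · exact fun p hp => (contDiffAt_fst.prodMk (hfs p hp.2)).contDiffWithinAt
  · rintro q ⟨hq, hq0⟩
    have hne : e.symm q ≠ (0, 0) := fun h0 => hq0 (by rw [← hright q hq, h0]; rfl)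
    exact (contDiffAt_symm_of_shear e (fun _ => rfl) hq (hfs _ hne)
      (hposf _ (e.map_target hq) hne)).contDiffWithinAt
  · exact fun q hq => congrArg Prod.snd (hright q hq)
end

section
/- Let n ≥ 1 and ξ ∈ ℤⁿ, and define g : ℂⁿ → ℝ (viewing ℂⁿ as a real vector space) by g(z) = Im( ∏_{i : ξᵢ>0} zᵢ^{ξᵢ} · ∏_{i : ξᵢ<0} conj(zᵢ)^{−ξᵢ} ). Fix w ∈ ℂⁿ and set I := {i : wᵢ = 0}. Assume ξᵢ ≥ 0 for every i ∈ I and that N := Σ_{i∈I} ξᵢ ≥ 1. Then: (a) all iterated (real) Fréchet derivatives of g at w of order strictly less than N vanish; and (b) for every v ∈ ℂⁿ, (1/N!)·D^N g(w)[v, …, v] = Im( ∏_{j∉I} wⱼ^{ξⱼ⁺}·conj(wⱼ)^{ξⱼ⁻} · ∏_{i∈I} vᵢ^{ξᵢ} ), where ξⱼ⁺ := max(ξⱼ, 0) and ξⱼ⁻ := max(−ξⱼ, 0). -/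
/-!
Splitting the index set into `I` and its complement gives `g = Im (A * M)`, where
`A z = ∏_{j ∉ I} z_j ^ ξ_j⁺ * conj(z_j) ^ ξ_j⁻` and `M z = ∏_{i ∈ I} z_i ^ ξ_i`; there are no
conjugates in `M` because `ξ ≥ 0` on `I`.

For the vanishing, each coordinate `z_i` with `i ∈ I` vanishes to order `1` at `w`, and orders of
vanishing add under multiplication (`VanishesToOrder.mul`, from the Leibniz bound on the norms of
iterated derivatives). Hence `M`, then `A * M`, then its imaginary part, vanish to order
`N = ∑_{i ∈ I} ξ_i`.

For the leading term, `D^N g(w)[v, …, v]` is the `N`-th derivative at `0` of `t ↦ g (w + t v)`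
(`iteratedFDeriv_diag_eq_iteratedDeriv`). As `w_i = 0` on `I`, this function is
`t ^ N * Im (A (w + t v) * M v)`, and by the Leibniz formula its `N`-th derivative at `0` is
`N! * Im (A w * M v)` (`iteratedDeriv_pow_mul_zero`).
-/

/-- `f` is smooth and all its real derivatives of order `< a` vanish at `w`. Smoothness is part of
the definition so that iterated derivatives of products obey the Leibniz rule. -/
def VanishesToOrder {E F : Type*} [NormedAddCommGroup E] [NormedSpace ℝ E]
    [NormedAddCommGroup F] [NormedSpace ℝ F] (f : E → F) (w : E) (a : ℕ) : Prop :=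
  ContDiff ℝ (⊤ : ℕ∞) f ∧ ∀ k < a, iteratedFDeriv ℝ k f w = 0

section VanishesToOrder

variable {E : Type*} [NormedAddCommGroup E] [NormedSpace ℝ E] {w : E}

/-- In each Leibniz term `D^i f * D^(k-i) g` of `D^k (f * g)` with `k < a + b`, either `i < a` or
`k - i < b`. -/
theorem VanishesToOrder.mul {f g : E → ℂ} {a b : ℕ}
    (hf : VanishesToOrder f w a) (hg : VanishesToOrder g w b) :
    VanishesToOrder (fun z => f z * g z) w (a + b) := by
  refine ⟨hf.1.mul hg.1, fun k hk => norm_le_zero_iff.1 ?_⟩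
  refine (norm_iteratedFDeriv_mul_le hf.1 hg.1 w (n := k) (by exact_mod_cast le_top)).trans
    (Finset.sum_nonpos fun i hi => ?_)
  rcases lt_or_ge i a with h | h
  · simp [hf.2 i h]
  · simp [hg.2 (k - i) (by have := Finset.mem_range.1 hi; omega)]

theorem ContDiff.vanishesToOrder_zero {f : E → ℂ} (hf : ContDiff ℝ (⊤ : ℕ∞) f) :
    VanishesToOrder f w 0 :=
  ⟨hf, fun _ hk => absurd hk (Nat.not_lt_zero _)⟩

theorem VanishesToOrder.pow {f : E → ℂ} (hf : VanishesToOrder f w 1) (m : ℕ) :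
    VanishesToOrder (fun z => f z ^ m) w m := by
  induction m with
  | zero => simpa using (contDiff_const (c := (1 : ℂ))).vanishesToOrder_zero (w := w)
  | succ m ih => simpa only [pow_succ] using ih.mul hf

theorem VanishesToOrder.prod {ι : Type*} {f : ι → E → ℂ} {a : ι → ℕ} (s : Finset ι)
    (hf : ∀ i ∈ s, VanishesToOrder (f i) w (a i)) :
    VanishesToOrder (fun z => ∏ i ∈ s, f i z) w (∑ i ∈ s, a i) := by
  classical
  induction s using Finset.induction_on with
  | empty => simpa using (contDiff_const (c := (1 : ℂ))).vanishesToOrder_zero (w := w)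
  | insert i s hi ih =>
    simp only [Finset.prod_insert hi, Finset.sum_insert hi]
    exact (hf i (Finset.mem_insert_self i s)).mul
      (ih fun j hj => hf j (Finset.mem_insert_of_mem hj))

theorem VanishesToOrder.im {f : E → ℂ} {a : ℕ} (hf : VanishesToOrder f w a) :
    VanishesToOrder (fun z => (f z).im) w a := by
  refine ⟨Complex.imCLM.contDiff.comp hf.1, fun k hk => ?_⟩
  have h := Complex.imCLM.iteratedFDeriv_comp_left hf.1.contDiffAt (x := w) (i := k)
    (by exact_mod_cast le_top)
  rw [hf.2 k hk] at h
  refine Eq.trans h ?_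
  ext m
  simp

end VanishesToOrder

/-- The diagonal of an iterated Fréchet derivative is a one-variable derivative along a line. -/
theorem iteratedFDeriv_diag_eq_iteratedDeriv {E : Type*} [NormedAddCommGroup E] [NormedSpace ℝ E]
    {f : E → ℝ} (hf : ContDiff ℝ (⊤ : ℕ∞) f) (w v : E) (k : ℕ) :
    iteratedFDeriv ℝ k f w (fun _ => v) = iteratedDeriv k (fun t : ℝ => f (w + t • v)) 0 := by
  have h := (ContinuousLinearMap.toSpanSingleton ℝ v).iteratedFDeriv_comp_right
    (f := fun z => f (w + z)) (hf.comp (contDiff_const.add contDiff_id)) 0 (i := k)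
    (by exact_mod_cast le_top)
  rw [iteratedFDeriv_comp_add_left] at h
  have h1 := congrArg (fun L => L fun _ => (1 : ℝ)) h
  rw [iteratedDeriv_eq_iteratedFDeriv]
  refine Eq.trans ?_ h1.symm
  simp

/-- Only the term differentiating `t ^ N` exactly `N` times survives at `0`. -/
theorem iteratedDeriv_pow_mul_zero {h : ℝ → ℝ} (hh : ContDiff ℝ (⊤ : ℕ∞) h) (N : ℕ) :
    iteratedDeriv N (fun t : ℝ => t ^ N * h t) 0 = N.factorial * h 0 := by
  have key := iteratedDeriv_mul (n := N) (x := (0 : ℝ)) (f := fun t : ℝ => t ^ N) (g := h)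
    (contDiff_id.pow N).contDiffAt (hh.of_le (by exact_mod_cast le_top)).contDiffAt
  refine Eq.trans key ?_
  rw [Finset.sum_range_succ, Finset.sum_eq_zero]
  · simp [Nat.descFactorial_self]
  · intro i hi
    rw [iteratedDeriv_fun_pow_zero, if_neg (Finset.mem_range.1 hi).ne]
    simp

/-- The defining product of `g`, with both sign conditions absorbed into the exponents
`ξ⁺ = ξ.toNat` and `ξ⁻ = (-ξ).toNat`, and split along `I`, where `ξ⁻ = 0`. -/
theorem signed_monomial_split {ι : Type*} [Fintype ι] [DecidableEq ι] (ξ : ι → ℤ) (I : Finset ι)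
    (hξI : ∀ i ∈ I, 0 ≤ ξ i) (z : ι → ℂ) :
    ((∏ i ∈ Finset.univ.filter fun i => 0 < ξ i, z i ^ (ξ i).toNat) *
        ∏ i ∈ Finset.univ.filter fun i => ξ i < 0, (starRingEnd ℂ) (z i) ^ (-ξ i).toNat) =
      (∏ j ∈ Iᶜ, z j ^ (ξ j).toNat * (starRingEnd ℂ) (z j) ^ (-ξ j).toNat) *
        ∏ i ∈ I, z i ^ (ξ i).toNat := by
  have hpos : ∏ i ∈ Finset.univ.filter (fun i => 0 < ξ i), z i ^ (ξ i).toNat =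
      ∏ i, z i ^ (ξ i).toNat := by
    refine Finset.prod_subset (Finset.filter_subset _ _) fun i _ hi => ?_
    have : ¬ 0 < ξ i := by simpa using hi
    rw [show (ξ i).toNat = 0 by omega, pow_zero]
  have hneg : ∏ i ∈ Finset.univ.filter (fun i => ξ i < 0),
      (starRingEnd ℂ) (z i) ^ (-ξ i).toNat = ∏ i, (starRingEnd ℂ) (z i) ^ (-ξ i).toNat := by
    refine Finset.prod_subset (Finset.filter_subset _ _) fun i _ hi => ?_
    have : ¬ ξ i < 0 := by simpa using hi
    rw [show (-ξ i).toNat = 0 by omega, pow_zero]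
  rw [hpos, hneg, ← Finset.prod_mul_distrib, ← Finset.prod_compl_mul_prod I]
  congr 1
  refine Finset.prod_congr rfl fun i hi => ?_
  rw [show (-ξ i).toNat = 0 by have := hξI i hi; omega, pow_zero, mul_one]


/-- The Taylor polynomial computation in the proof of Proposition 7.1 of the paper: for
`g(z) = Im(∏_{ξᵢ>0} zᵢ^{ξᵢ} · ∏_{ξᵢ<0} conj(zᵢ)^{-ξᵢ})` on `ℂⁿ` (viewed as a real vector
space), `w ∈ ℂⁿ`, `I = {i : wᵢ = 0}` with `ξᵢ ≥ 0` for `i ∈ I` and `N = ∑_{i∈I} ξᵢ ≥ 1`: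
(a) all real iterated Fréchet derivatives of `g` at `w` of order `< N` vanish, and
(b) `(1/N!)·D^N g(w)[v,…,v] = Im(∏_{j∉I} wⱼ^{ξⱼ⁺}·conj(wⱼ)^{ξⱼ⁻} · ∏_{i∈I} vᵢ^{ξᵢ})`,
where `ξⱼ⁺ = max(ξⱼ,0)` and `ξⱼ⁻ = max(-ξⱼ,0)` (encoded via `Int.toNat`). -/
theorem g_vanishes_below_order_N (n : ℕ) (hn : 1 ≤ n) (ξ : Fin n → ℤ)
    (g : (Fin n → ℂ) → ℝ)
    (hg : ∀ z : Fin n → ℂ, g z =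
      ((∏ i ∈ Finset.univ.filter fun i => 0 < ξ i, z i ^ (ξ i).toNat) *
        ∏ i ∈ Finset.univ.filter fun i => ξ i < 0, (starRingEnd ℂ) (z i) ^ (-ξ i).toNat).im)
    (w : Fin n → ℂ) (I : Finset (Fin n)) (hI : ∀ i, i ∈ I ↔ w i = 0)
    (hξI : ∀ i ∈ I, 0 ≤ ξ i)
    (N : ℕ) (hN : (N : ℤ) = ∑ i ∈ I, ξ i) (hN1 : 1 ≤ N) :
    (∀ k, k < N → iteratedFDeriv ℝ k g w = 0) ∧
    ∀ v : Fin n → ℂ,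
      (1 / (N.factorial : ℝ)) * iteratedFDeriv ℝ N g w (fun _ => v) =
        ((∏ j ∈ Iᶜ, w j ^ (ξ j).toNat * (starRingEnd ℂ) (w j) ^ (-ξ j).toNat) *
          ∏ i ∈ I, v i ^ (ξ i).toNat).im := by
  set A : (Fin n → ℂ) → ℂ := fun z =>
    ∏ j ∈ Iᶜ, z j ^ (ξ j).toNat * (starRingEnd ℂ) (z j) ^ (-ξ j).toNat with hA
  set M : (Fin n → ℂ) → ℂ := fun z => ∏ i ∈ I, z i ^ (ξ i).toNat with hM
  have hgAM : g = fun z => (A z * M z).im := by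
    funext z
    rw [hg z, signed_monomial_split ξ I hξI z]
  have hNsum : N = ∑ i ∈ I, (ξ i).toNat := by
    zify
    rw [hN]
    exact Finset.sum_congr rfl fun i hi => (Int.toNat_of_nonneg (hξI i hi)).symm
  have hcoord : ∀ i, ContDiff ℝ (⊤ : ℕ∞) fun z : Fin n → ℂ => z i := fun i => contDiff_apply ℝ ℂ i
  have hAsmooth : ContDiff ℝ (⊤ : ℕ∞) A :=
    contDiff_prod fun j _ => ((hcoord j).pow _).mul
      ((Complex.conjCLE.contDiff.comp (hcoord j)).pow _)
  have hMvan : VanishesToOrder M w N := by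
    rw [hNsum]
    refine VanishesToOrder.prod I fun i hi => VanishesToOrder.pow ⟨hcoord i, fun k hk => ?_⟩ _
    obtain rfl : k = 0 := by omega
    ext m
    simpa using (hI i).1 hi
  have hgvan : VanishesToOrder g w N := by
    rw [hgAM]
    simpa using (hAsmooth.vanishesToOrder_zero.mul hMvan).im
  refine ⟨hgvan.2, fun v => ?_⟩
  have hMline : ∀ t : ℝ, M (w + t • v) = (t : ℂ) ^ N * M v := by
    intro t
    rw [hNsum, ← Finset.prod_pow_eq_pow_sum, hM, ← Finset.prod_mul_distrib]
    refine Finset.prod_congr rfl fun i hi => ?_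
    simp [(hI i).1 hi, mul_pow]
  have hline : (fun t : ℝ => g (w + t • v)) =
      fun t : ℝ => t ^ N * (A (w + t • v) * M v).im := by
    funext t
    rw [hgAM]
    simp only [hMline]
    rw [mul_left_comm, ← Complex.ofReal_pow, Complex.im_ofReal_mul]
  have hh : ContDiff ℝ (⊤ : ℕ∞) fun t : ℝ => (A (w + t • v) * M v).im :=
    Complex.imCLM.contDiff.comp ((hAsmooth.comp
      (contDiff_const.add (contDiff_id.smul contDiff_const))).mul contDiff_const)
  rw [iteratedFDeriv_diag_eq_iteratedDeriv hgvan.1, hline, iteratedDeriv_pow_mul_zero hh,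
    zero_smul, add_zero, one_div, inv_mul_cancel_left₀ (by exact_mod_cast N.factorial_ne_zero)]
end

section
/- Let n ≥ 1 and let H be a closed subgroup of the n-torus Tⁿ = {λ ∈ ℂⁿ : |λᵢ| = 1 for all i} such that the quotient topological group Tⁿ/H is isomorphic, as a topological group, to the circle group S¹ = {z ∈ ℂ : |z| = 1}. Then there exists ξ ∈ ℤⁿ such that H = {λ ∈ Tⁿ : ∏ᵢ₌₁ⁿ λᵢ^{ξᵢ} = 1}. Moreover, if ξ′ ∈ ℤⁿ also satisfies H = {λ ∈ Tⁿ : ∏ᵢ λᵢ^{ξ′ᵢ} = 1}, then ξ′ = ξ or ξ′ = −ξ. -/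
/-!
Composing the projection `Tⁿ → Tⁿ/H` with the isomorphism `e` gives a continuous homomorphism
`Tⁿ → S¹` with kernel `H`. Its restriction to each coordinate circle is a continuous
endomorphism of `S¹`. Such an endomorphism is a power map (`circle_endomorphism_eq_zpow`): pull it
back along `exp : ℝ → S¹`, lift the result through the covering `exp` to a continuous additive,
hence linear, map `t ↦ c t`, and observe that `c` is an integer because `exp (2 π c) = 1`. Since an
element of `Tⁿ` is the product of its coordinates, the whole homomorphism is
`λ ↦ ∏ᵢ λᵢ^{ξᵢ}`.

Uniqueness (`eq_or_eq_neg_of_kernel_eq`) holds for any two characters with the same kernel, the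
trivial one included. Evaluating on points of a coordinate circle shows that `ξᵢ` and `ξ'ᵢ` divide
each other, so `ξ'ᵢ = ± ξᵢ`. The one-parameter families `λᵢ = z^{ξⱼ}`, `λⱼ = z^{-ξᵢ}` lie in the
kernel of `ξ`, hence of `ξ'`, which gives `ξⱼ ξ'ᵢ = ξᵢ ξ'ⱼ`, so the sign does not depend on `i`.
-/

/-- The lift `F` of `t ↦ f (exp t)` through the covering `exp` with `F 0 = 0` is additive because
`F (x + ·)` and `F x + F ·` are lifts of the same map agreeing at `0`. -/
theorem circle_endomorphism_eq_zpow (f : Circle →* Circle) (hf : Continuous f) :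
    ∃ m : ℤ, ∀ z, f z = z ^ m := by
  obtain ⟨F, ⟨hF0, hF⟩, -⟩ := Circle.isCoveringMap_exp.existsUnique_continuousMap_lifts
    (⟨fun t : ℝ => f (Circle.exp t), by fun_prop⟩ : C(ℝ, Circle)) 0 0 (by simp)
  have hF' : ∀ t, Circle.exp (F t) = f (Circle.exp t) := fun t => congrFun hF t
  have hadd : ∀ x y, F (x + y) = F x + F y := by
    intro x
    refine congrFun (Circle.isCoveringMap_exp.eq_of_comp_eq (g₁ := fun y => F (x + y))
      (g₂ := fun y => F x + F y) (by fun_prop) (by fun_prop) ?_ 0 (by simp [hF0]))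
    funext y
    simp [hF', Circle.exp_add]
  let L : ℝ →L[ℝ] ℝ :=
    (⟨⟨F, hF0⟩, hadd⟩ : ℝ →+ ℝ).toRealLinearMap F.continuous
  have hlin : ∀ t, F t = t * F 1 := by
    intro t
    have h := L.map_smul t 1
    simpa [L] using h
  have hone : Circle.exp (F (2 * Real.pi)) = 1 := by simp [hF']
  obtain ⟨m, hm⟩ := Circle.exp_eq_one.1 hone
  have hm' : F 1 = m := by
    rw [hlin] at hm
    have := Real.two_pi_pos.ne'
    apply mul_left_cancel₀ this
    linarith
  refine ⟨m, fun z => ?_⟩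
  obtain ⟨t, rfl⟩ := Circle.exp_surjective z
  rw [← hF', hlin, hm', mul_comm, Circle.exp_intCast_mul]

theorem prod_mulSingle_zpow {n : ℕ} (ξ : Fin n → ℤ) (i : Fin n) (z : Circle) :
    ∏ k, (Pi.mulSingle i z : Fin n → Circle) k ^ ξ k = z ^ ξ i := by
  rw [Finset.prod_eq_single i]
  · simp
  · intro k _ hk
    simp [Pi.mulSingle_eq_of_ne hk]
  · simp

theorem int_eq_zero_of_circle_zpow_eq_one {k : ℤ} (h : ∀ z : Circle, z ^ k = 1) : k = 0 := by
  by_contra hk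
  have hk' : (k : ℝ) ≠ 0 := by exact_mod_cast hk
  apply Circle.exp_pi_ne_one
  rw [← h (Circle.exp (Real.pi / k)), ← Circle.exp_intCast_mul]
  congr 1
  field_simp

/-- If every `a`-th root of unity in the circle is a `b`-th root of unity, then `a ∣ b`; for
`a = 0` the hypothesis concerns all points of the circle. -/
theorem dvd_of_circle_zpow_eq_one {a b : ℤ} (h : ∀ z : Circle, z ^ a = 1 → z ^ b = 1) :
    a ∣ b := by
  rcases eq_or_ne a 0 with rfl | ha
  · rw [int_eq_zero_of_circle_zpow_eq_one fun z => h z (zpow_zero z)]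
  have ha' : (a : ℝ) ≠ 0 := by exact_mod_cast ha
  -- a primitive `a`-th root of unity
  have hb := h (Circle.exp (2 * Real.pi / a)) (by
    rw [← Circle.exp_intCast_mul, mul_div_cancel₀ _ ha', Circle.exp_two_pi])
  rw [← Circle.exp_intCast_mul, Circle.exp_eq_one] at hb
  obtain ⟨m, hm⟩ := hb
  refine ⟨m, ?_⟩
  have : (b : ℝ) = a * m := by
    have hpi := Real.pi_ne_zero
    field_simp at hm
    linarith
  exact_mod_cast this

theorem eq_or_eq_neg_of_kernel_eq {n : ℕ} (ξ ξ' : Fin n → ℤ)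
    (h : ∀ l : Fin n → Circle, ∏ i, l i ^ ξ i = 1 ↔ ∏ i, l i ^ ξ' i = 1) :
    ξ' = ξ ∨ ξ' = -ξ := by
  have hpm : ∀ i, ξ' i = ξ i ∨ ξ' i = -ξ i := by
    intro i
    have hi : ∀ z : Circle, z ^ ξ i = 1 ↔ z ^ ξ' i = 1 := fun z => by
      simpa only [prod_mulSingle_zpow] using h (Pi.mulSingle i z)
    exact Int.natAbs_eq_natAbs_iff.1 (Int.natAbs_eq_of_dvd_dvd
      (dvd_of_circle_zpow_eq_one fun z => (hi z).2) (dvd_of_circle_zpow_eq_one fun z => (hi z).1))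
  have hcross : ∀ i j, ξ j * ξ' i = ξ i * ξ' j := by
    intro i j
    have key : ∀ (η : Fin n → ℤ) (z : Circle),
        ∏ k, ((Pi.mulSingle i (z ^ ξ j) * Pi.mulSingle j (z ^ (-ξ i)) : Fin n → Circle) k) ^ η k
          = z ^ (ξ j * η i - ξ i * η j) := by
      intro η z
      simp only [Pi.mul_apply, mul_zpow, Finset.prod_mul_distrib]
      rw [prod_mulSingle_zpow, prod_mulSingle_zpow, ← zpow_mul, ← zpow_mul, ← zpow_add]
      congr 1
      ring
    refine sub_eq_zero.1 (int_eq_zero_of_circle_zpow_eq_one fun z => ?_)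
    rw [← key ξ' z, ← h, key ξ z, mul_comm, sub_self, zpow_zero]
  by_cases hall : ξ' = ξ
  · exact Or.inl hall
  right
  obtain ⟨i, hi⟩ := Function.ne_iff.1 hall
  have hneg := (hpm i).resolve_left hi
  have hne : ξ i ≠ 0 := fun h0 => hi (by rw [hneg, h0, neg_zero])
  funext j
  have hc := hcross i j
  rw [hneg] at hc
  apply mul_left_cancel₀ hne
  rw [← hc, Pi.neg_apply]
  ring


/-- Group-theoretic content of Lemma 2.1 of the paper: a closed subgroup `H` of the torus
`Tⁿ = (S¹)ⁿ` whose quotient `Tⁿ/H` is isomorphic to the circle `S¹` as a topological group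
is the kernel of a character `λ ↦ ∏ᵢ λᵢ^{ξᵢ}`, and the exponent vector `ξ ∈ ℤⁿ` is unique
up to sign. -/
theorem codim_one_subgroup_is_character_kernel (n : ℕ) (hn : 1 ≤ n)
    (H : Subgroup (Fin n → Circle))
    (hclosed : IsClosed (H : Set (Fin n → Circle)))
    (e : ((Fin n → Circle) ⧸ H) ≃* Circle)
    (hecont : Continuous e) (hesymm : Continuous e.symm) :
    ∃ ξ : Fin n → ℤ,
      (∀ l : Fin n → Circle, l ∈ H ↔ ∏ i, l i ^ ξ i = 1) ∧
      ∀ ξ' : Fin n → ℤ,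
        (∀ l : Fin n → Circle, l ∈ H ↔ ∏ i, l i ^ ξ' i = 1) →
        ξ' = ξ ∨ ξ' = -ξ := by
  let φ : (Fin n → Circle) →* Circle := e.toMonoidHom.comp (QuotientGroup.mk' H)
  have hφ : Continuous φ := hecont.comp continuous_quot_mk
  have hker : ∀ l, l ∈ H ↔ φ l = 1 := fun l => by
    simp [φ, QuotientGroup.eq_one_iff]
  choose ξ hξ using fun i => circle_endomorphism_eq_zpow
    (φ.comp (MonoidHom.mulSingle (fun _ : Fin n => Circle) i))
    (hφ.comp (continuous_mulSingle (A := fun _ : Fin n => Circle) i))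
  have hφξ : ∀ l, φ l = ∏ i, l i ^ ξ i := by
    intro l
    conv_lhs => rw [← Finset.univ_prod_mulSingle l, map_prod]
    exact Finset.prod_congr rfl fun i _ => hξ i (l i)
  have hH : ∀ l, l ∈ H ↔ ∏ i, l i ^ ξ i = 1 := fun l => by rw [hker, hφξ]
  exact ⟨ξ, hH, fun ξ' hξ' =>
    eq_or_eq_neg_of_kernel_eq ξ ξ' fun l => (hH l).symm.trans (hξ' l)⟩
end
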